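/- arXiv:2001.03033 — 4 statements merged into one kernel-verified Lean document; each statement's English description precedes it below -/
import Mathlib

section
/- Let A < B be real numbers and m ≥ 3 an integer. Let Δ be holomorphic on the closed strip Σ_{A,B} = {ζ ∈ ℂ : A ≤ Re ζ ≤ B} with ‖Δ‖_m := sup_{ζ∈Σ_{A,B}} |Δ(ζ)|·|ζ|^m < ∞. Then for every ζ with A < Re ζ < B one has the Cauchy splitting Δ(ζ) = (1/(2π))·∫_ℝ Δ(B+is)/((B+is)−ζ) ds − (1/(2π))·∫_ℝ Δ(A+is)/((A+is)−ζ) ds, where both improper integrals converge absolutely. -/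
open Complex MeasureTheory

/-!
Apply Cauchy's theorem to the divided difference `(f z - f ζ) / (z - ζ)`, which has a removable
singularity at `ζ`, on rectangles that exhaust the strip. The horizontal sides contribute nothing in
the limit because `f z = o(z)`. On the vertical sides, `f ζ` is multiplied by the integral of
`1 / (z - ζ)`, which converges only as a principal value: pairing `s` with `-s` turns it into an
arctangent, with limit `π` to the right of `ζ` and `-π` to its left. The difference of the two is
the factor `2π`.
-/

section CauchySplitting

open Asymptotics Bornology Filter Set Topology Interval

/-- The integrand `f z / (z - ζ)` of the Cauchy integral of `f` at `ζ` along the vertical line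
`z = c + i s`, as a function of `s`. The factor `i` of `dz = i ds` is left out. -/
noncomputable def verticalCauchyIntegrand {E : Type*} [AddCommGroup E] [Module ℂ E]
    (f : ℂ → E) (c : ℝ) (ζ : ℂ) (s : ℝ) : E :=
  ((c + s * I : ℂ) - ζ)⁻¹ • f (c + s * I)

lemma verticalCauchyIntegrand_eq_div (f : ℂ → ℂ) (c : ℝ) (ζ : ℂ) :
    verticalCauchyIntegrand f c ζ = fun s : ℝ => f (c + s * I) / (c + s * I - ζ) :=
  funext fun _ => inv_mul_eq_div _ _

section Kernel

variable {c : ℝ} {ζ : ℂ}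

lemma verticalLine_sub_ne_zero (hc : c ≠ ζ.re) (s : ℝ) : (c + s * I : ℂ) - ζ ≠ 0 := fun h =>
  hc <| by simpa [sub_eq_zero] using congrArg re h

lemma continuous_inv_verticalLine_sub (hc : c ≠ ζ.re) :
    Continuous fun s : ℝ => ((c + s * I : ℂ) - ζ)⁻¹ :=
  Continuous.inv₀ (by fun_prop) (verticalLine_sub_ne_zero hc)

lemma continuous_comp_verticalLine {X : Type*} [TopologicalSpace X] {g : ℂ → X} {A B : ℝ}
    (hg : ContinuousOn g (re ⁻¹' Icc A B)) (hc : c ∈ Icc A B) :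
    Continuous fun s : ℝ => g (c + s * I) :=
  hg.comp_continuous (by fun_prop) fun s => by simpa using hc

lemma integral_add_comp_neg {E : Type*} [NormedAddCommGroup E] [NormedSpace ℝ E] {F : ℝ → E}
    {T : ℝ} (hF : IntervalIntegrable F volume (-T) T) :
    ∫ u in -T..T, (F u + F (-u)) = 2 • ∫ u in -T..T, F u := by
  have hF_neg : IntervalIntegrable (fun u => F (-u)) volume (-T) T := by
    simpa using (IntervalIntegrable.iff_comp_neg (by finiteness)).mp hF.symm
  rw [intervalIntegral.integral_add hF hF_neg, intervalIntegral.integral_comp_neg, neg_neg,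
    two_nsmul]

lemma inv_add_mul_I_add_inv_sub_mul_I {b : ℝ} (hb : b ≠ 0) (u : ℝ) :
    (b + u * I : ℂ)⁻¹ + (b + (-u : ℝ) * I : ℂ)⁻¹ = ((2 * b * (b ^ 2 + u ^ 2)⁻¹ : ℝ) : ℂ) := by
  have h_ne (v : ℝ) : (b + v * I : ℂ) ≠ 0 := by
    simpa using verticalLine_sub_ne_zero (ζ := 0) (c := b) (by simpa using hb) v
  have h_prod : (b + u * I : ℂ) * (b + (-u : ℝ) * I) = b ^ 2 + u ^ 2 := by
    push_cast
    linear_combination -(u : ℂ) ^ 2 * I_sq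
  rw [inv_add_inv (h_ne u) (h_ne (-u)), h_prod]
  push_cast
  ring

lemma integral_inv_add_mul_I {b : ℝ} (hb : b ≠ 0) (T : ℝ) :
    ∫ u in -T..T, (b + u * I : ℂ)⁻¹ = ((2 * Real.arctan (T / b) : ℝ) : ℂ) := by
  have h_cont : Continuous fun u : ℝ => (b + u * I : ℂ)⁻¹ := by
    simpa using continuous_inv_verticalLine_sub (ζ := 0) (c := b) (by simpa using hb)
  have h_even : ∫ u in -T..T, 2 * b * (b ^ 2 + u ^ 2)⁻¹ = 2 * (2 * Real.arctan (T / b)) := by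
    rw [intervalIntegral.integral_const_mul, integral_inv_sq_add_sq hb, neg_div, Real.arctan_neg]
    field_simp
    ring
  have h_double := integral_add_comp_neg (h_cont.intervalIntegrable (-T) T)
  simp only [inv_add_mul_I_add_inv_sub_mul_I hb] at h_double
  rw [intervalIntegral.integral_ofReal, h_even, nsmul_eq_mul, Nat.cast_ofNat, ofReal_mul,
    ofReal_ofNat] at h_double
  exact (mul_left_cancel₀ two_ne_zero h_double).symm

lemma integral_inv_verticalLine_sub (hc : c ≠ ζ.re) (T : ℝ) :
    ∫ s in (ζ.im - T)..(ζ.im + T), ((c + s * I : ℂ) - ζ)⁻¹ =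
      ((2 * Real.arctan (T / (c - ζ.re)) : ℝ) : ℂ) := by
  rw [← integral_inv_add_mul_I (sub_ne_zero.mpr hc), sub_eq_add_neg,
    ← intervalIntegral.integral_comp_add_left (fun s : ℝ => ((c + s * I : ℂ) - ζ)⁻¹)]
  congr! 3 with u
  apply Complex.ext <;> simp

lemma tendsto_integral_inv_verticalLine_sub_of_re_lt (hc : ζ.re < c) :
    Tendsto (fun T : ℝ => ∫ s in (ζ.im - T)..(ζ.im + T), ((c + s * I : ℂ) - ζ)⁻¹) atTop
      (𝓝 (Real.pi : ℂ)) := by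
  simp only [integral_inv_verticalLine_sub hc.ne']
  have h_arctan := (Real.tendsto_arctan_atTop.mono_right nhdsWithin_le_nhds).comp
    (tendsto_id.atTop_div_const (sub_pos.mpr hc))
  have h_lim := (continuous_ofReal.tendsto _).comp (h_arctan.const_mul 2)
  rwa [mul_div_cancel₀ Real.pi two_ne_zero] at h_lim

lemma tendsto_integral_inv_verticalLine_sub_of_lt_re (hc : c < ζ.re) :
    Tendsto (fun T : ℝ => ∫ s in (ζ.im - T)..(ζ.im + T), ((c + s * I : ℂ) - ζ)⁻¹) atTop
      (𝓝 (-Real.pi : ℂ)) := by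
  simp only [integral_inv_verticalLine_sub hc.ne]
  have h_arctan := (Real.tendsto_arctan_atBot.mono_right nhdsWithin_le_nhds).comp
    (tendsto_id.atTop_div_const_of_neg (sub_neg.mpr hc))
  have h_lim := (continuous_ofReal.tendsto _).comp (h_arctan.const_mul 2)
  rwa [mul_neg, mul_div_cancel₀ Real.pi two_ne_zero, ofReal_neg] at h_lim

lemma one_add_norm_isBigO_verticalLine_sub (c : ℝ) (ζ : ℂ) :
    (fun s : ℝ => 1 + ‖s‖) =O[cobounded ℝ] fun s : ℝ => (c + s * I : ℂ) - ζ := by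
  have h_one : (fun _ : ℝ => (1 : ℝ)) =O[cobounded ℝ] fun s : ℝ => s :=
    (isLittleO_const_id_cobounded (1 : ℝ)).isBigO
  have h_shift : (fun s : ℝ => s) =O[cobounded ℝ] fun s => s - ζ.im :=
    (isLittleO_const_id_cobounded ζ.im).right_isBigO_sub
  have h_im : (fun s : ℝ => s - ζ.im) =O[cobounded ℝ] fun s : ℝ => (c + s * I : ℂ) - ζ :=
    isBigO_of_le _ fun s => by simpa using abs_im_le_norm ((c + s * I : ℂ) - ζ)
  exact (h_one.add (isBigO_refl _ _).norm_left).trans (h_shift.trans h_im)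

end Kernel

variable {E : Type*} [NormedAddCommGroup E] {f : ℂ → E} {A B c r M : ℝ} {ζ : ℂ}

section Decay

lemma isBigO_one_add_norm_rpow_of_norm_mul_rpow_le (hr : 0 ≤ r)
    (hf : ∀ s : ℝ, ‖f (c + s * I)‖ * ‖(c + s * I : ℂ)‖ ^ r ≤ M) :
    (fun s : ℝ => f (c + s * I)) =O[cobounded ℝ] fun s => (1 + ‖s‖) ^ (-r) := by
  have h_line : (fun s : ℝ => (1 + ‖s‖) ^ r) =O[cobounded ℝ] fun s => ‖(c + s * I : ℂ)‖ ^ r :=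
    IsBigO.rpow hr (.of_forall fun s => norm_nonneg _)
      (by simpa using (one_add_norm_isBigO_verticalLine_sub c 0).norm_right)
  have h_bdd : (fun s : ℝ => ‖f (c + s * I)‖ * ‖(c + s * I : ℂ)‖ ^ r) =O[cobounded ℝ]
      fun _ => (1 : ℝ) :=
    IsBigO.of_bound M <| .of_forall fun s => by
      simpa [abs_of_nonneg (Real.rpow_nonneg (norm_nonneg _) _)] using hf s
  have h_weighted : (fun s : ℝ => ‖f (c + s * I)‖ * (1 + ‖s‖) ^ r) =O[cobounded ℝ]
      fun _ => (1 : ℝ) :=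
    ((isBigO_refl (fun s : ℝ => ‖f (c + s * I)‖) _).mul h_line).trans h_bdd
  refine (h_weighted.mul (isBigO_refl (fun s : ℝ => (1 + ‖s‖) ^ (-r)) _)).congr
    (fun s => ?_) (fun s => one_mul _) |>.of_norm_left
  have h_pos : 0 < 1 + ‖s‖ := by positivity
  rw [mul_assoc, ← Real.rpow_add h_pos, add_neg_cancel, Real.rpow_zero, mul_one]

lemma isLittleO_id_of_norm_mul_rpow_le {V : Type*} [NormedAddCommGroup V] {g : V → E} {S : Set V}
    (hr : 0 ≤ r) (hg : ∀ z ∈ S, ‖g z‖ * ‖z‖ ^ r ≤ M) : g =o[cobounded V ⊓ 𝓟 S] id := by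
  have h_bdd : g =O[cobounded V ⊓ 𝓟 S] fun _ => (1 : ℝ) := by
    refine IsBigO.of_bound M ?_
    filter_upwards [(tendsto_norm_cobounded_atTop.eventually_ge_atTop 1).filter_mono inf_le_left,
      mem_inf_of_right (mem_principal_self S)] with z hz hzS
    rw [norm_one, mul_one]
    exact (le_mul_of_one_le_right (norm_nonneg _) (Real.one_le_rpow hz hr)).trans (hg z hzS)
  exact h_bdd.trans_isLittleO ((isLittleO_const_id_cobounded _).mono inf_le_left)

lemma tendsto_dslope_zero_of_isLittleO_id {𝕜 : Type*} [NontriviallyNormedField 𝕜]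
    [NormedSpace 𝕜 E] {g : 𝕜 → E} {l : Filter 𝕜} (hl : l ≤ cobounded 𝕜) (hg : g =o[l] id) (a : 𝕜) :
    Tendsto (dslope g a) l (𝓝 0) := by
  have h_num : (fun z => g z - g a) =o[l] id :=
    hg.sub ((isLittleO_const_id_cobounded (g a)).mono hl)
  have h_den : id =O[l] fun z => z - a :=
    ((isLittleO_const_id_cobounded a).mono hl).right_isBigO_sub
  have h_ne : ∀ᶠ z in l, z ≠ a := (eventually_ne_cobounded a).filter_mono hl
  refine (h_num.trans_isBigO h_den).tendsto_inv_smul_nhds_zero.congr' ?_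
  filter_upwards [h_ne] with z hz
  rw [dslope_of_ne g hz, slope, vsub_eq_sub]

lemma integrable_verticalCauchyIntegrand [NormedSpace ℂ E] (hc : c ≠ ζ.re) (hr : 0 < r)
    (h_cont : Continuous fun s : ℝ => f (c + s * I))
    (h_decay : (fun s : ℝ => f (c + s * I)) =O[cobounded ℝ] fun s => (1 + ‖s‖) ^ (-r)) :
    Integrable (verticalCauchyIntegrand f c ζ) := by
  have h_kernel : (fun s : ℝ => ((c + s * I : ℂ) - ζ)⁻¹) =O[cobounded ℝ]
      fun s => (1 + ‖s‖)⁻¹ :=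
    (one_add_norm_isBigO_verticalLine_sub c ζ).inv_rev <| .of_forall fun s h => by
      have : 0 < 1 + ‖s‖ := by positivity
      exact absurd h this.ne'
  have h_bound : verticalCauchyIntegrand f c ζ =O[cobounded ℝ] fun s => (1 + ‖s‖) ^ (-(1 + r)) := by
    refine (h_kernel.smul h_decay).congr_right fun s => ?_
    have h_pos : 0 < 1 + ‖s‖ := by positivity
    rw [neg_add, Real.rpow_add h_pos, Real.rpow_neg_one, smul_eq_mul]
  have h_cont' : Continuous (verticalCauchyIntegrand f c ζ) :=
    (continuous_inv_verticalLine_sub hc).smul h_cont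
  have h_majorant : Integrable fun s : ℝ => (1 + ‖s‖) ^ (-(1 + r)) :=
    integrable_one_add_norm (by simpa using hr)
  rw [Metric.cobounded_eq_cocompact] at h_bound
  exact h_cont'.locallyIntegrable.integrable_of_isBigO_cocompact h_bound
    (h_majorant.integrableAtFilter _)

end Decay

section Contour

lemma tendsto_integral_horizontal_zero [NormedSpace ℝ E] (hAB : A ≤ B)
    (hf : Tendsto f (cobounded ℂ ⊓ 𝓟 (re ⁻¹' Icc A B)) (𝓝 0)) :
    Tendsto (fun y : ℝ => ∫ x in A..B, f (x + y * I)) (cobounded ℝ) (𝓝 0) := by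
  rw [NormedAddGroup.tendsto_nhds_zero] at hf ⊢
  intro ε hε
  have h_den : 0 < |B - A| + 1 := by positivity
  obtain ⟨R, -, hR⟩ := (hasBasis_cobounded_norm.inf_principal _).eventually_iff.mp
    (hf (ε / (|B - A| + 1)) (by positivity))
  filter_upwards [tendsto_norm_cobounded_atTop.eventually_ge_atTop R] with y hy
  have h_side : ∀ x ∈ Ι A B, ‖f (x + y * I)‖ ≤ ε / (|B - A| + 1) := fun x hx => by
    rw [uIoc_of_le hAB] at hx
    refine (hR ⟨?_, by simpa using ⟨hx.1.le, hx.2⟩⟩).le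
    exact hy.trans (by simpa using abs_im_le_norm (x + y * I : ℂ))
  calc ‖∫ x in A..B, f (x + y * I)‖ ≤ ε / (|B - A| + 1) * |B - A| :=
        intervalIntegral.norm_integral_le_of_norm_le_const h_side
    _ < ε := by
        rw [div_mul_eq_mul_div, div_lt_iff₀ h_den]
        gcongr
        exact lt_add_one _

variable [NormedSpace ℂ E]

lemma tendsto_integral_vertical_sub_zero (hAB : A ≤ B) {S : Set ℂ} (hS : S.Countable)
    (h_cont : ContinuousOn f (re ⁻¹' Icc A B))
    (h_diff : ∀ z ∈ re ⁻¹' Ioo A B \ S, DifferentiableAt ℂ f z)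
    (h_zero : Tendsto f (cobounded ℂ ⊓ 𝓟 (re ⁻¹' Icc A B)) (𝓝 0))
    {ι : Type*} {l : Filter ι} {a b : ι → ℝ}
    (ha : Tendsto a l (cobounded ℝ)) (hb : Tendsto b l (cobounded ℝ)) :
    Tendsto (fun t => (∫ s in a t..b t, f (B + s * I)) - ∫ s in a t..b t, f (A + s * I)) l
      (𝓝 0) := by
  have h_rect (t : ι) : (∫ s in a t..b t, f (B + s * I)) - ∫ s in a t..b t, f (A + s * I) =
      I • ((∫ x in A..B, f (x + a t * I)) - ∫ x in A..B, f (x + b t * I)) := by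
    have h_cauchy := integral_boundary_rect_eq_zero_of_differentiable_on_off_countable f
      ⟨A, a t⟩ ⟨B, b t⟩ S hS (h_cont.mono fun z hz => by simpa [uIcc_of_le hAB] using hz.1)
      fun z hz => h_diff z ⟨by simpa [hAB] using hz.1.1, hz.2⟩
    rw [add_sub_assoc, ← smul_sub, add_eq_zero_iff_eq_neg] at h_cauchy
    rw [h_cauchy, smul_neg, smul_smul, I_mul_I, neg_one_smul, neg_neg]
  have h_horizontal := tendsto_integral_horizontal_zero hAB h_zero
  simpa [h_rect] using ((h_horizontal.comp ha).sub (h_horizontal.comp hb)).const_smul I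

variable [CompleteSpace E]

lemma integral_dslope_verticalLine (hc : c ≠ ζ.re) (h_cont : Continuous fun s : ℝ => f (c + s * I))
    (a b : ℝ) :
    ∫ s in a..b, dslope f ζ (c + s * I) =
      (∫ s in a..b, verticalCauchyIntegrand f c ζ s) -
        (∫ s in a..b, ((c + s * I : ℂ) - ζ)⁻¹) • f ζ := by
  have h_kernel := continuous_inv_verticalLine_sub hc
  have h_integrand : Continuous (verticalCauchyIntegrand f c ζ) := h_kernel.smul h_cont
  have h_pole : Continuous fun s : ℝ => ((c + s * I : ℂ) - ζ)⁻¹ • f ζ :=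
    h_kernel.smul continuous_const
  have h_dslope (s : ℝ) : dslope f ζ (c + s * I) =
      verticalCauchyIntegrand f c ζ s - ((c + s * I : ℂ) - ζ)⁻¹ • f ζ := by
    rw [dslope_of_ne f (sub_ne_zero.mp (verticalLine_sub_ne_zero hc s)), slope, vsub_eq_sub,
      smul_sub, verticalCauchyIntegrand]
  simp only [h_dslope]
  rw [intervalIntegral.integral_sub (h_integrand.intervalIntegrable _ _)
    (h_pole.intervalIntegrable _ _),
    intervalIntegral.integral_smul_const]

lemma tendsto_integral_dslope_verticalLine (hc : c ≠ ζ.re)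
    (h_cont : Continuous fun s : ℝ => f (c + s * I))
    (h_int : Integrable (verticalCauchyIntegrand f c ζ)) {w : ℂ}
    (hw : Tendsto (fun T : ℝ => ∫ s in (ζ.im - T)..(ζ.im + T), ((c + s * I : ℂ) - ζ)⁻¹) atTop
      (𝓝 w)) :
    Tendsto (fun T : ℝ => ∫ s in (ζ.im - T)..(ζ.im + T), dslope f ζ (c + s * I)) atTop
      (𝓝 ((∫ s, verticalCauchyIntegrand f c ζ s) - w • f ζ)) := by
  simp only [integral_dslope_verticalLine hc h_cont]
  exact (intervalIntegral_tendsto_integral h_int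
    (tendsto_atBot_add_const_left _ _ tendsto_neg_atTop_atBot)
    (tendsto_atTop_add_const_left _ _ tendsto_id)).sub (hw.smul_const _)

theorem integral_verticalCauchyIntegrand_sub (h_cont : ContinuousOn f (re ⁻¹' Icc A B))
    (h_diff : DifferentiableOn ℂ f (re ⁻¹' Ioo A B))
    (h_growth : f =o[cobounded ℂ ⊓ 𝓟 (re ⁻¹' Icc A B)] id) (hζ : ζ.re ∈ Ioo A B)
    (hA : Integrable (verticalCauchyIntegrand f A ζ))
    (hB : Integrable (verticalCauchyIntegrand f B ζ)) :
    (∫ s, verticalCauchyIntegrand f B ζ s) - ∫ s, verticalCauchyIntegrand f A ζ s =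
      (2 * Real.pi : ℂ) • f ζ := by
  have hAB : A ≤ B := (hζ.1.trans hζ.2).le
  have h_open : IsOpen (re ⁻¹' Ioo A B) := isOpen_Ioo.preimage continuous_re
  have h_diffAt : ∀ z ∈ re ⁻¹' Ioo A B, DifferentiableAt ℂ f z := fun z hz =>
    h_diff.differentiableAt (h_open.mem_nhds hz)
  have h_nhds : re ⁻¹' Icc A B ∈ 𝓝 ζ :=
    mem_of_superset (h_open.mem_nhds hζ) (preimage_mono Ioo_subset_Icc_self)
  have h_bottom : Tendsto (fun T => ζ.im - T) atTop (cobounded ℝ) :=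
    (tendsto_atBot_add_const_left _ _ tendsto_neg_atTop_atBot).mono_right
      IsOrderBornology.atBot_le_cobounded
  have h_top : Tendsto (fun T => ζ.im + T) atTop (cobounded ℝ) :=
    (tendsto_atTop_add_const_left _ _ tendsto_id).mono_right IsOrderBornology.atTop_le_cobounded
  have h_shift := tendsto_integral_vertical_sub_zero hAB (countable_singleton ζ)
    ((continuousOn_dslope h_nhds).mpr ⟨h_cont, h_diffAt ζ hζ⟩)
    (fun z hz => (differentiableAt_dslope_of_ne hz.2).mpr (h_diffAt z hz.1))
    (tendsto_dslope_zero_of_isLittleO_id inf_le_left h_growth ζ)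
    h_bottom h_top
  have h_right := tendsto_integral_dslope_verticalLine hζ.2.ne'
    (continuous_comp_verticalLine h_cont (right_mem_Icc.mpr hAB)) hB
    (tendsto_integral_inv_verticalLine_sub_of_re_lt hζ.2)
  have h_left := tendsto_integral_dslope_verticalLine hζ.1.ne
    (continuous_comp_verticalLine h_cont (left_mem_Icc.mpr hAB)) hA
    (tendsto_integral_inv_verticalLine_sub_of_lt_re hζ.1)
  have h_eq := tendsto_nhds_unique (h_right.sub h_left) h_shift
  rw [← sub_eq_zero, ← h_eq]
  module

theorem statement9_general (hr : 0 < r) (h_cont : ContinuousOn f (re ⁻¹' Icc A B))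
    (h_diff : DifferentiableOn ℂ f (interior (re ⁻¹' Icc A B)))
    (h_decay : ∀ z ∈ re ⁻¹' Icc A B, ‖f z‖ * ‖z‖ ^ r ≤ M) (hζ : ζ.re ∈ Ioo A B) :
    Integrable (verticalCauchyIntegrand f B ζ) ∧ Integrable (verticalCauchyIntegrand f A ζ) ∧
      f ζ = (1 / (2 * Real.pi : ℂ)) • (∫ s, verticalCauchyIntegrand f B ζ s) -
        (1 / (2 * Real.pi : ℂ)) • ∫ s, verticalCauchyIntegrand f A ζ s := by
  rw [interior_preimage_re, interior_Icc] at h_diff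
  have hAB : A ≤ B := (hζ.1.trans hζ.2).le
  have h_int {c : ℝ} (hc : c ∈ Icc A B) (hne : c ≠ ζ.re) :
      Integrable (verticalCauchyIntegrand f c ζ) :=
    integrable_verticalCauchyIntegrand hne hr (continuous_comp_verticalLine h_cont hc)
      (isBigO_one_add_norm_rpow_of_norm_mul_rpow_le hr.le
        fun s => h_decay _ (by simpa using hc))
  have hB := h_int (right_mem_Icc.mpr hAB) hζ.2.ne'
  have hA := h_int (left_mem_Icc.mpr hAB) hζ.1.ne
  have h_two_pi : (2 * Real.pi : ℂ) ≠ 0 := by simp [Real.pi_ne_zero]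
  refine ⟨hB, hA, ?_⟩
  rw [← smul_sub, integral_verticalCauchyIntegrand_sub h_cont h_diff
    (isLittleO_id_of_norm_mul_rpow_le hr.le h_decay) hζ hA hB, smul_smul,
    one_div_mul_cancel h_two_pi, one_smul]

end Contour

end CauchySplitting

/-- Cauchy splitting on a strip. If `Δ` is holomorphic on the closed strip
`{A ≤ Re ζ ≤ B}` with `sup |Δ(ζ)|·|ζ|^m < ∞` for some `m ≥ 3`, then for `A < Re ζ < B`,
`Δ(ζ) = (1/2π)∫_ℝ Δ(B+is)/((B+is)−ζ) ds − (1/2π)∫_ℝ Δ(A+is)/((A+is)−ζ) ds`,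
both integrals being absolutely convergent. -/
theorem statement9 (A B : ℝ) (hAB : A < B) (m : ℕ) (hm : 3 ≤ m)
    (Δ : ℂ → ℂ)
    (hcont : ContinuousOn Δ {ζ : ℂ | A ≤ ζ.re ∧ ζ.re ≤ B})
    (hdiff : DifferentiableOn ℂ Δ (interior {ζ : ℂ | A ≤ ζ.re ∧ ζ.re ≤ B}))
    (hnorm : ∃ M : ℝ, ∀ ζ : ℂ, A ≤ ζ.re → ζ.re ≤ B →
      ‖Δ ζ‖ * ‖ζ‖ ^ m ≤ M) :
    ∀ ζ : ℂ, A < ζ.re → ζ.re < B →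
      Integrable (fun s : ℝ => Δ ((B : ℂ) + (s : ℂ) * Complex.I) /
        (((B : ℂ) + (s : ℂ) * Complex.I) - ζ)) ∧
      Integrable (fun s : ℝ => Δ ((A : ℂ) + (s : ℂ) * Complex.I) /
        (((A : ℂ) + (s : ℂ) * Complex.I) - ζ)) ∧
      Δ ζ = (1 / (2 * (Real.pi : ℂ))) *
          (∫ s : ℝ, Δ ((B : ℂ) + (s : ℂ) * Complex.I) /
            (((B : ℂ) + (s : ℂ) * Complex.I) - ζ)) -
        (1 / (2 * (Real.pi : ℂ))) *
          (∫ s : ℝ, Δ ((A : ℂ) + (s : ℂ) * Complex.I) /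
            (((A : ℂ) + (s : ℂ) * Complex.I) - ζ)) := by
  obtain ⟨M, hM⟩ := hnorm
  intro ζ hA hB
  simpa only [verticalCauchyIntegrand_eq_div, smul_eq_mul] using statement9_general (r := m)
    (by positivity) hcont hdiff (fun z hz => by simpa using hM z hz.1 hz.2) ⟨hA, hB⟩
end

section
/- Let A, B be real numbers with A + λ₁ < B ≤ 1, let m ≥ 3 be an integer, and let Δ be holomorphic on the closed strip Σ_{A,B} = {ζ ∈ ℂ : A ≤ Re ζ ≤ B} with ‖Δ‖_m := sup_{ζ∈Σ_{A,B}} |Δ(ζ)|·|ζ|^m < ∞. Then there exists a bounded holomorphic function φ on the closed strip Σ_{A,B+λ₁} = {ζ ∈ ℂ : A ≤ Re ζ ≤ B+λ₁} satisfying the difference equation φ(ζ+λ) − φ(ζ) = Δ(ζ) for all ζ ∈ Σ_{A,B}; moreover any two bounded holomorphic solutions on Σ_{A,B+λ₁} differ by an additive constant. -/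
open Complex

/-!
The function `K z = (2πi / l) / (exp (2πi z / l) - 1)` has period `l` and simple poles of residue
`1` exactly at the points of `ℤ l`; it plays the role of the Cauchy kernel `1 / z` for the
difference operator `φ ↦ φ (· + l) - φ`. Put `φ ζ = (2πi)⁻¹ ∫ K (z - ζ) Δ z dz` over a vertical line
`Re z = c` with `c < Re ζ < c + Re l`. Since `K` has period `l`, the difference `φ (ζ + l) - φ ζ`
is the difference of two such integrals of the same function, over lines on either side of its pole
`ζ`, and the residue theorem evaluates it to `Δ ζ`. By Cauchy's theorem `φ ζ` does not depend on
`c`, so moving the line along with `ζ` gives a holomorphic solution on the whole open strip.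

The line cannot be moved beyond the domain of `Δ`, so the integral does not control `φ` near the
boundary; but there the difference equation expresses `φ` through `Δ` and through values of `φ` well
inside the strip, which yields continuity and boundedness up to the boundary.

The difference of two bounded solutions is invariant under translation by `l`, hence extends to a
bounded entire function, which is constant by Liouville's theorem.
-/

section

open MeasureTheory ProbabilityTheory Filter Set Bornology
open scoped Topology NNReal

lemma exists_norm_le_of_eventually_cobounded {X F : Type*} [PseudoMetricSpace X] [ProperSpace X]
    [SeminormedAddCommGroup F] {f : X → F} {s : Set X} {C : ℝ} (hs : IsClosed s)
    (hf : ContinuousOn f s) (hC : ∀ᶠ x in cobounded X ⊓ 𝓟 s, ‖f x‖ ≤ C) :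
    ∃ C', ∀ x ∈ s, ‖f x‖ ≤ C' := by
  rw [eventually_inf_principal] at hC
  have hK : IsCompact (s ∩ closure {x | x ∈ s → ‖f x‖ ≤ C}ᶜ) :=
    Metric.isCompact_of_isClosed_isBounded (hs.inter isClosed_closure)
      ((isBounded_compl_iff.2 hC).closure.subset inter_subset_right)
  obtain ⟨N, hN⟩ := hK.exists_bound_of_continuousOn (hf.mono inter_subset_left)
  refine ⟨max C N, fun x hx => ?_⟩
  by_cases hxC : ‖f x‖ ≤ C
  · exact hxC.trans (le_max_left _ _)
  · exact (hN x ⟨hx, subset_closure fun h => hxC (h hx)⟩).trans (le_max_right _ _)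

lemma tendsto_im_cobounded_inf_strip (a b : ℝ) :
    Tendsto im (cobounded ℂ ⊓ 𝓟 (re ⁻¹' Icc a b)) (cobounded ℝ) := by
  rw [← tendsto_norm_atTop_iff_cobounded]
  refine tendsto_atTop_mono' _ ?_ (tendsto_atTop_add_const_right _ (-max |a| |b|)
    (tendsto_norm_cobounded_atTop.mono_left inf_le_left))
  filter_upwards [mem_inf_of_right (mem_principal_self _)] with z hz
  have hre : |z.re| ≤ max |a| |b| := abs_le_max_abs_abs hz.1 hz.2
  rw [Real.norm_eq_abs]
  linarith [norm_le_abs_re_add_abs_im z]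

section VerticalLines

variable {E : Type*} [NormedAddCommGroup E] {f : ℂ → E} {a b c : ℝ}

lemma continuous_comp_verticalLine_s10 {s : Set ℂ} (hf : ContinuousOn f s)
    (hs : ∀ t : ℝ, (c + t * I : ℂ) ∈ s) : Continuous fun t : ℝ => f (c + t * I) :=
  hf.comp_continuous (by fun_prop) hs

variable [NormedSpace ℂ E]

lemma tendsto_integral_horizontalSegment (hab : a ≤ b)
    (hf : Tendsto f (cobounded ℂ ⊓ 𝓟 (re ⁻¹' Icc a b)) (𝓝 0)) :
    Tendsto (fun T : ℝ => ∫ x in a..b, f (x + T * I)) (cobounded ℝ) (𝓝 0) := by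
  rw [NormedAddGroup.tendsto_nhds_zero] at hf ⊢
  intro ε hε
  have hlen : 0 < b - a + 1 := by linarith
  obtain ⟨R, -, hR⟩ := (hasBasis_cobounded_norm.inf_principal _).eventually_iff.1
    (hf (ε / (b - a + 1)) (div_pos hε hlen))
  filter_upwards [eventually_cobounded_le_norm R] with T hT
  have hbound : ∀ x ∈ uIoc a b, ‖f (x + T * I)‖ ≤ ε / (b - a + 1) := by
    intro x hx
    rw [uIoc_of_le hab] at hx
    refine (hR ⟨hT.trans ?_, ?_⟩).le
    · simpa using abs_im_le_norm (x + T * I : ℂ)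
    · simpa using Ioc_subset_Icc_self hx
  calc ‖∫ x in a..b, f (x + T * I)‖ ≤ ε / (b - a + 1) * |b - a| :=
        intervalIntegral.norm_integral_le_of_norm_le_const hbound
    _ < ε := by
        rw [abs_of_nonneg (sub_nonneg.2 hab), div_mul_eq_mul_div, div_lt_iff₀ hlen]
        linarith

-- Only the difference is assumed integrable: this covers functions of order `1 / z` at infinity.
theorem integral_verticalLine_sub_eq_zero (hab : a ≤ b) (hc : ContinuousOn f (re ⁻¹' Icc a b))
    (hd : DifferentiableOn ℂ f (re ⁻¹' Ioo a b))
    (h0 : Tendsto f (cobounded ℂ ⊓ 𝓟 (re ⁻¹' Icc a b)) (𝓝 0))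
    (hint : Integrable fun t : ℝ => f (b + t * I) - f (a + t * I)) :
    ∫ t : ℝ, (f (b + t * I) - f (a + t * I)) = 0 := by
  have hca : Continuous fun t : ℝ => f (a + t * I) :=
    continuous_comp_verticalLine_s10 hc fun t => by simpa using hab
  have hcb : Continuous fun t : ℝ => f (b + t * I) :=
    continuous_comp_verticalLine_s10 hc fun t => by simpa using hab
  have hrect : ∀ T : ℝ, (∫ x in a..b, f (x + T * I)) - (∫ x in a..b, f (x + (-T : ℝ) * I)) =
      I • ∫ t in (-T)..T, (f (b + t * I) - f (a + t * I)) := by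
    intro T
    rw [intervalIntegral.integral_sub (hcb.intervalIntegrable _ _) (hca.intervalIntegrable _ _),
      smul_sub, eq_comm, ← sub_eq_zero]
    have h := integral_boundary_rect_eq_zero_of_continuousOn_of_differentiableOn f
      ⟨a, -T⟩ ⟨b, T⟩ (hc.mono fun z hz => by simpa [uIcc_of_le hab] using hz.1)
      (hd.mono fun z hz => by simpa [hab] using hz.1)
    rw [← h]
    abel
  have hhor := tendsto_integral_horizontalSegment hab h0
  have hzero := (hhor.comp (tendsto_id.mono_right IsOrderBornology.atTop_le_cobounded)).sub
    (hhor.comp (tendsto_neg_atTop_atBot.mono_right IsOrderBornology.atBot_le_cobounded))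
  have hlim := ((intervalIntegral_tendsto_integral hint tendsto_neg_atTop_atBot
    tendsto_id).const_smul I).congr fun T => (hrect T).symm
  simpa using tendsto_nhds_unique hlim hzero

variable [CompleteSpace E]

lemma exists_eq_sub_inv_smul_of_tendsto {s t : Set ℂ} {ζ : ℂ} {r : E} (hs : s ∈ 𝓝 ζ) (hst : s ⊆ t)
    (hc : ContinuousOn f (t \ {ζ})) (hd : DifferentiableOn ℂ f (s \ {ζ}))
    (hres : Tendsto (fun z => (z - ζ) • f z) (𝓝[≠] ζ) (𝓝 r)) :
    ∃ g : ℂ → E, ContinuousOn g t ∧ DifferentiableOn ℂ g s ∧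
      ∀ z ≠ ζ, g z = f z - (z - ζ)⁻¹ • r := by
  set G : ℂ → E := Function.update (fun z => (z - ζ) • f z) ζ r with hG
  have hG_ne : ∀ z ≠ ζ, G z = (z - ζ) • f z := fun z hz => Function.update_of_ne hz _ _
  have hG_cont : ContinuousOn G t :=
    continuousOn_update_iff.2 ⟨(by fun_prop : ContinuousOn (fun z => z - ζ) _).smul hc,
      fun _ => hres.mono_left (nhdsWithin_mono _ fun z hz => hz.2)⟩
  have hG_diff : DifferentiableOn ℂ G s :=
    (differentiableOn_compl_singleton_and_continuousAt_iff hs).1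
      ⟨((by fun_prop : DifferentiableOn ℂ (fun z => z - ζ) _).smul hd).congr
        fun z hz => hG_ne z hz.2, continuousAt_update_same.2 hres⟩
  refine ⟨dslope G ζ, (continuousOn_dslope (mem_of_superset hs hst)).2
    ⟨hG_cont, hG_diff.differentiableAt hs⟩, (differentiableOn_dslope hs).2 hG_diff, fun z hz => ?_⟩
  rw [dslope_of_ne _ hz, slope_def_module, hG_ne z hz, smul_sub,
    inv_smul_smul₀ (sub_ne_zero.2 hz), hG, Function.update_self]

lemma inv_add_mul_I_sub_inv_neg_add_mul_I {δ : ℝ≥0} (hδ : δ ≠ 0) (y t : ℝ) :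
    (δ + (t - y) * I : ℂ)⁻¹ - (-δ + (t - y) * I)⁻¹ =
      (2 * Real.pi * cauchyPDFReal y δ t : ℝ) := by
  have hne : ∀ d : ℝ, d ≠ 0 → (d + (t - y) * I : ℂ) ≠ 0 := fun d hd h =>
    hd (by simpa using congrArg re h)
  have hpos : ((t - y) ^ 2 + δ ^ 2 : ℂ) ≠ 0 := by
    have : (t - y) ^ 2 + (δ : ℝ) ^ 2 ≠ 0 := by positivity
    exact_mod_cast this
  have h1 := hne δ (by simpa using hδ)
  have h2 := hne (-δ) (by simpa using hδ)
  have hπ : (Real.pi : ℂ) ≠ 0 := by simp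
  push_cast at h2
  have hmul : (δ + (t - y) * I : ℂ) * (-δ + (t - y) * I) = -((t - y) ^ 2 + δ ^ 2) := by
    linear_combination (t - y : ℂ) ^ 2 * I_sq
  rw [inv_sub_inv h1 h2, hmul, cauchyPDFReal_def]
  push_cast
  field_simp
  ring

theorem integral_verticalLine_sub_eq_of_simplePole {ζ : ℂ} {δ : ℝ≥0} {r : E} (hδ : δ ≠ 0)
    (hc : ContinuousOn f (re ⁻¹' Icc (ζ.re - δ) (ζ.re + δ) \ {ζ}))
    (hd : DifferentiableOn ℂ f (re ⁻¹' Ioo (ζ.re - δ) (ζ.re + δ) \ {ζ}))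
    (hres : Tendsto (fun z => (z - ζ) • f z) (𝓝[≠] ζ) (𝓝 r))
    (h0 : Tendsto f (cobounded ℂ ⊓ 𝓟 (re ⁻¹' Icc (ζ.re - δ) (ζ.re + δ))) (𝓝 0))
    (hint : Integrable fun t : ℝ => f ((ζ.re + δ : ℝ) + t * I) - f ((ζ.re - δ : ℝ) + t * I)) :
    ∫ t : ℝ, (f ((ζ.re + δ : ℝ) + t * I) - f ((ζ.re - δ : ℝ) + t * I)) =
      (2 * Real.pi : ℝ) • r := by
  have hδ_pos : (0 : ℝ) < δ := by positivity
  have hmem : re ⁻¹' Ioo (ζ.re - δ) (ζ.re + δ) ∈ 𝓝 ζ :=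
    (isOpen_Ioo.preimage continuous_re).mem_nhds ⟨by linarith, by linarith⟩
  obtain ⟨g, hgc, hgd, hg⟩ := exists_eq_sub_inv_smul_of_tendsto hmem
    (preimage_mono Ioo_subset_Icc_self) hc hd hres
  have hg0 : Tendsto g (cobounded ℂ ⊓ 𝓟 (re ⁻¹' Icc (ζ.re - δ) (ζ.re + δ))) (𝓝 0) := by
    have hinv : Tendsto (fun z => (z - ζ)⁻¹ • r) (cobounded ℂ) (𝓝 0) := by
      simpa using (tendsto_inv₀_cobounded.comp (tendsto_sub_const_cobounded ζ)).smul_const r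
    have hne : ∀ᶠ z in cobounded ℂ, z ≠ ζ := isBounded_singleton (x := ζ)
    refine (sub_zero (0 : E) ▸ h0.sub (hinv.mono_left inf_le_left)).congr' ?_
    filter_upwards [hne.filter_mono inf_le_left] with z hz using (hg z hz).symm
  have hg_line : ∀ t : ℝ, g ((ζ.re + δ : ℝ) + t * I) - g ((ζ.re - δ : ℝ) + t * I) =
      (f ((ζ.re + δ : ℝ) + t * I) - f ((ζ.re - δ : ℝ) + t * I)) -
        (2 * Real.pi * cauchyPDFReal ζ.im δ t) • r := by
    intro t
    have hne : ∀ c : ℝ, c ≠ ζ.re → (c + t * I : ℂ) ≠ ζ := fun c hc h => hc (by simp [← h])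
    rw [hg _ (hne _ (by linarith)), hg _ (hne _ (by linarith)), sub_sub_sub_comm, ← sub_smul,
      ← coe_smul, ← inv_add_mul_I_sub_inv_neg_add_mul_I hδ]
    congr 4 <;> apply Complex.ext <;> simp
  have hpole : Integrable fun t : ℝ => (2 * Real.pi * cauchyPDFReal ζ.im δ t) • r :=
    ((integrable_cauchyPDFReal ζ.im).const_mul _).smul_const r
  have hg_int := integral_verticalLine_sub_eq_zero (by linarith) hgc hgd hg0
    ((hint.sub hpole).congr (.of_forall fun t => (hg_line t).symm))
  simp_rw [hg_line] at hg_int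
  rw [integral_sub hint hpole, sub_eq_zero, integral_smul_const, integral_const_mul,
    integral_cauchyPDFReal_eq_one _ hδ, mul_one] at hg_int
  exact hg_int

end VerticalLines

section PeriodKernel

variable {l w : ℂ}

/-- The `l`-periodic analogue of the Cauchy kernel `1 / w`: it has simple poles of residue `1` at
the multiples of `l` and stays bounded at both ends of a strip transverse to `l`. At the poles
its value is the junk value `0` of a division by zero. -/
noncomputable def periodKernel (l w : ℂ) : ℂ :=
  2 * Real.pi * I / l / (exp (2 * Real.pi * I / l * w) - 1)

lemma periodKernel_periodic (hl : l ≠ 0) : Function.Periodic (periodKernel l) l := fun w => by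
  rw [periodKernel, mul_add, div_mul_cancel₀ _ hl, exp_periodic, periodKernel]

lemma exp_two_pi_I_div_mul_ne_one (hw : w ≠ 0) (hwl : |w.re| < l.re) :
    exp (2 * Real.pi * I / l * w) ≠ 1 := by
  have hl : 0 < l.re := (abs_nonneg _).trans_lt hwl
  have hl0 : l ≠ 0 := fun h => by simp [h] at hl
  intro h
  obtain ⟨n, hn⟩ := exp_eq_one_iff.1 h
  have hwn : w = n * l := by
    rw [div_mul_eq_mul_div, div_eq_iff hl0] at hn
    exact mul_left_cancel₀ two_pi_I_ne_zero (by linear_combination hn)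
  have hn0 : n = 0 := by
    have hn1 : |(n : ℝ)| < 1 := by
      rw [hwn, ← ofReal_intCast, re_ofReal_mul, abs_mul, abs_of_pos hl] at hwl
      exact lt_of_mul_lt_mul_right (by linarith) hl.le
    exact Int.abs_lt_one_iff.1 (by exact_mod_cast hn1)
  simp [hwn, hn0] at hw

lemma exp_two_pi_I_div_mul_ne_one_of_re_mem_Ioo (hw : w.re ∈ Ioo (-l.re) 0) :
    exp (2 * Real.pi * I / l * w) ≠ 1 :=
  exp_two_pi_I_div_mul_ne_one (fun h => by simp [h] at hw)
    (abs_lt.2 ⟨hw.1, by linarith [hw.1, hw.2]⟩)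

lemma hasDerivAt_periodKernel (hw : exp (2 * Real.pi * I / l * w) ≠ 1) :
    HasDerivAt (periodKernel l) (-(periodKernel l w * (periodKernel l w + 2 * Real.pi * I / l)))
      w := by
  simp only [periodKernel]
  set u := 2 * Real.pi * I / l
  have hne : exp (u * w) - 1 ≠ 0 := sub_ne_zero.2 hw
  have hden : HasDerivAt (fun z => exp (u * z) - 1) (exp (u * w) * u) w := by
    simpa using ((hasDerivAt_id w).const_mul u).cexp.sub_const 1
  refine ((hasDerivAt_const w u).div hden hne).congr_deriv ?_
  field_simp
  ring

lemma tendsto_mul_periodKernel (hl : l ≠ 0) :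
    Tendsto (fun w => w * periodKernel l w) (𝓝[≠] 0) (𝓝 1) := by
  set u := 2 * Real.pi * I / l with hu
  have hu0 : u ≠ 0 := div_ne_zero two_pi_I_ne_zero hl
  have hexp : HasDerivAt (fun z => exp (u * z)) u 0 := by
    simpa using ((hasDerivAt_id (0 : ℂ)).const_mul u).cexp
  have h := (hexp.tendsto_slope_zero.inv₀ hu0).const_mul u
  rw [mul_inv_cancel₀ hu0] at h
  refine h.congr fun w => ?_
  simp only [zero_add, mul_zero, exp_zero, smul_eq_mul, periodKernel, ← hu]
  rw [mul_inv, inv_inv]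
  ring

lemma one_half_le_norm_exp_sub_one {z : ℂ} (hz : 1 ≤ |z.re|) : 1 / 2 ≤ ‖exp z - 1‖ := by
  rcases le_abs.1 hz with h | h
  · have htri := norm_sub_norm_le (exp z) 1
    rw [norm_exp, norm_one] at htri
    linarith [Real.add_one_le_exp z.re]
  · have htri := norm_sub_norm_le 1 (exp z)
    rw [norm_exp, norm_one, norm_sub_rev] at htri
    have hexp : Real.exp z.re ≤ 1 / 2 := by
      calc Real.exp z.re ≤ Real.exp (-1) := Real.exp_le_exp.2 (by linarith)
        _ ≤ 1 / 2 := by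
          rw [Real.exp_neg, one_div]
          exact inv_anti₀ two_pos (by linarith [Real.add_one_le_exp 1])
    linarith

lemma eventually_norm_periodKernel_le (hl : 0 < l.re) (a b : ℝ) :
    ∀ᶠ w in cobounded ℂ ⊓ 𝓟 (re ⁻¹' Icc a b), ‖periodKernel l w‖ ≤ 2 * ‖2 * Real.pi * I / l‖ := by
  simp only [periodKernel]
  set u := 2 * Real.pi * I / l with hu
  have hu_im : 0 < u.im := by
    have hl0 : l ≠ 0 := fun h => by simp [h] at hl
    have : 0 < normSq l := normSq_pos.2 hl0
    have : u.im = 2 * Real.pi * l.re / normSq l := by simp [hu, div_im]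
    rw [this]
    positivity
  filter_upwards [(tendsto_im_cobounded_inf_strip a b).eventually (eventually_cobounded_le_norm
    ((1 + |u.re| * max |a| |b|) / u.im)), mem_inf_of_right (mem_principal_self _)] with w him hre
  have hfar : 1 ≤ |(u * w).re| := by
    rw [div_le_iff₀ hu_im, Real.norm_eq_abs] at him
    calc 1 ≤ |w.im| * u.im - |u.re| * max |a| |b| := by linarith
      _ ≤ |u.im * w.im| - |u.re * w.re| := by
        rw [abs_mul, abs_mul, abs_of_pos hu_im, mul_comm u.im]
        gcongr
        exact abs_le_max_abs_abs hre.1 hre.2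
      _ ≤ |(u * w).re| := by
        rw [mul_re, abs_sub_comm]
        exact abs_sub_abs_le_abs_sub _ _
  have hden := one_half_le_norm_exp_sub_one hfar
  rw [norm_div, div_le_iff₀ (by linarith)]
  nlinarith [norm_nonneg u]

lemma exists_norm_periodKernel_le {a b : ℝ} (ha : -l.re < a) (hb : b < 0) :
    ∃ C, ∀ w ∈ re ⁻¹' Icc a b, ‖periodKernel l w‖ ≤ C := by
  rcases le_or_gt a b with hab | hab
  · refine exists_norm_le_of_eventually_cobounded (isClosed_Icc.preimage continuous_re)
      (fun w hw => ?_) (eventually_norm_periodKernel_le (by linarith) a b)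
    exact (hasDerivAt_periodKernel (exp_two_pi_I_div_mul_ne_one_of_re_mem_Ioo
      ⟨ha.trans_le hw.1, hw.2.trans_lt hb⟩)).continuousAt.continuousWithinAt
  · simp [Icc_eq_empty_of_lt hab]

end PeriodKernel

section ContourSolution

variable {E : Type*} [NormedAddCommGroup E] [NormedSpace ℂ E] {l : ℂ} {Δ : ℂ → E} {A B c : ℝ}
  {ζ : ℂ}

/-- `Δ` is holomorphic on the closed strip `A ≤ Re z ≤ B` and dominated there by an integrable
function of `Im z` vanishing at infinity. This is all the contour integrals below require of the
right-hand side of the difference equation. -/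
structure IsDominatedOnStrip (Δ : ℂ → E) (A B : ℝ) : Prop where
  continuousOn : ContinuousOn Δ (re ⁻¹' Icc A B)
  differentiableOn : DifferentiableOn ℂ Δ (re ⁻¹' Ioo A B)
  exists_majorant : ∃ g : ℝ → ℝ, Integrable g ∧ Tendsto g (cobounded ℝ) (𝓝 0) ∧
    ∀ z ∈ re ⁻¹' Icc A B, ‖Δ z‖ ≤ g z.im

/-- The candidate solution of `φ (ζ + l) - φ ζ = Δ ζ` given by integration along the vertical line
`Re z = c`. It is meant for `c < Re ζ < c + Re l`, where the line avoids the poles of the kernel. -/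
noncomputable def contourSolution (l : ℂ) (Δ : ℂ → E) (c : ℝ) (ζ : ℂ) : E :=
  (2 * Real.pi : ℝ)⁻¹ • ∫ t : ℝ, periodKernel l (c + t * I - ζ) • Δ (c + t * I)

lemma add_mul_I_mem_strip (hc : c ∈ Icc A B) (t : ℝ) : (c + t * I : ℂ) ∈ re ⁻¹' Icc A B := by
  simpa using hc

lemma re_add_mul_I_sub_mem_Ioo (hζ : ζ.re ∈ Ioo c (c + l.re)) (t : ℝ) :
    (c + t * I - ζ).re ∈ Ioo (-l.re) 0 := by
  constructor <;> simp <;> linarith [hζ.1, hζ.2]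

lemma continuous_periodKernel_verticalLine (hζ : ζ.re ∈ Ioo c (c + l.re)) :
    Continuous fun t : ℝ => periodKernel l (c + t * I - ζ) := by
  refine continuous_iff_continuousAt.2 fun t => ?_
  have hK := (hasDerivAt_periodKernel (exp_two_pi_I_div_mul_ne_one_of_re_mem_Ioo
    (re_add_mul_I_sub_mem_Ioo hζ t))).continuousAt
  exact ContinuousAt.comp (f := fun t : ℝ => (c + t * I - ζ : ℂ)) hK (by fun_prop)

lemma hasDerivAt_periodKernel_verticalLine (hζ : ζ.re ∈ Ioo c (c + l.re)) (t : ℝ) :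
    HasDerivAt (fun z => periodKernel l (c + t * I - z)) (periodKernel l (c + t * I - ζ) *
      (periodKernel l (c + t * I - ζ) + 2 * Real.pi * I / l)) ζ := by
  simpa using (hasDerivAt_periodKernel (exp_two_pi_I_div_mul_ne_one_of_re_mem_Ioo
    (re_add_mul_I_sub_mem_Ioo hζ t))).comp_const_sub (c + t * I) ζ

lemma tendsto_sub_smul_periodKernel_smul (hl : l ≠ 0) (hΔ : ContinuousAt Δ ζ) :
    Tendsto (fun z => (z - ζ) • periodKernel l (z - ζ) • Δ z) (𝓝[≠] ζ) (𝓝 (Δ ζ)) := by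
  have hshift : Tendsto (fun z => z - ζ) (𝓝[≠] ζ) (𝓝[≠] 0) := by
    refine tendsto_nhdsWithin_iff.2 ⟨?_, ?_⟩
    · simpa using ((continuous_sub_right ζ).tendsto ζ).mono_left nhdsWithin_le_nhds
    · filter_upwards [self_mem_nhdsWithin] with z hz using sub_ne_zero.2 hz
  simpa [smul_smul] using ((tendsto_mul_periodKernel hl).comp hshift).smul
    (hΔ.tendsto.mono_left nhdsWithin_le_nhds)

namespace IsDominatedOnStrip

lemma continuous_verticalLine (h : IsDominatedOnStrip Δ A B) (hc : c ∈ Icc A B) :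
    Continuous fun t : ℝ => Δ (c + t * I) :=
  continuous_comp_verticalLine_s10 h.continuousOn (add_mul_I_mem_strip hc)

lemma integrable_verticalLine (h : IsDominatedOnStrip Δ A B) (hc : c ∈ Icc A B) :
    Integrable fun t : ℝ => Δ (c + t * I) := by
  obtain ⟨g, hg, -, hΔ⟩ := h.exists_majorant
  refine hg.mono' (h.continuous_verticalLine hc).aestronglyMeasurable (.of_forall fun t => ?_)
  simpa using hΔ _ (add_mul_I_mem_strip hc t)

lemma tendsto_zero (h : IsDominatedOnStrip Δ A B) :
    Tendsto Δ (cobounded ℂ ⊓ 𝓟 (re ⁻¹' Icc A B)) (𝓝 0) := by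
  obtain ⟨g, -, hg, hΔ⟩ := h.exists_majorant
  refine squeeze_zero_norm' ?_ (hg.comp (tendsto_im_cobounded_inf_strip A B))
  filter_upwards [mem_inf_of_right (mem_principal_self _)] with z hz using hΔ z hz

lemma exists_norm_le (h : IsDominatedOnStrip Δ A B) : ∃ M, ∀ z ∈ re ⁻¹' Icc A B, ‖Δ z‖ ≤ M := by
  refine exists_norm_le_of_eventually_cobounded (C := 1) (isClosed_Icc.preimage continuous_re)
    h.continuousOn ?_
  filter_upwards [NormedAddGroup.tendsto_nhds_zero.1 h.tendsto_zero 1 one_pos] with z hz using hz.le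

lemma tendsto_periodKernel_smul {a b : ℝ} (h : IsDominatedOnStrip Δ A B) (hl : 0 < l.re)
    (hab : Icc a b ⊆ Icc A B) (ζ : ℂ) :
    Tendsto (fun z => periodKernel l (z - ζ) • Δ z) (cobounded ℂ ⊓ 𝓟 (re ⁻¹' Icc a b)) (𝓝 0) := by
  have hshift : Tendsto (fun z => z - ζ) (cobounded ℂ ⊓ 𝓟 (re ⁻¹' Icc a b))
      (cobounded ℂ ⊓ 𝓟 (re ⁻¹' Icc (a - ζ.re) (b - ζ.re))) :=
    (tendsto_sub_const_cobounded ζ).inf (tendsto_principal_principal.2 fun z hz => by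
      simpa using hz)
  have hK := hshift.eventually (eventually_norm_periodKernel_le hl _ _)
  exact Filter.IsBoundedUnder.smul_tendsto_zero ⟨_, eventually_map.2 hK⟩ (h.tendsto_zero.mono_left
    (inf_le_inf_left _ (principal_mono.2 (preimage_mono hab))))

lemma integrable_periodKernel_smul (h : IsDominatedOnStrip Δ A B) (hc : c ∈ Icc A B)
    (hζ : ζ.re ∈ Ioo c (c + l.re)) :
    Integrable fun t : ℝ => periodKernel l (c + t * I - ζ) • Δ (c + t * I) := by
  obtain ⟨C, hC⟩ := exists_norm_periodKernel_le (l := l) (a := c - ζ.re) (b := c - ζ.re)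
    (by linarith [hζ.2]) (by linarith [hζ.1])
  exact (h.integrable_verticalLine hc).bdd_smul C
    (continuous_periodKernel_verticalLine hζ).aestronglyMeasurable
    (.of_forall fun t => hC _ (by simp))

lemma exists_norm_contourSolution_le {p q : ℝ} (h : IsDominatedOnStrip Δ A B) (hp : 0 < p)
    (hq : q < l.re) :
    ∃ M, ∀ c ∈ Icc A B, ∀ ζ : ℂ, ζ.re - c ∈ Icc p q → ‖contourSolution l Δ c ζ‖ ≤ M := by
  obtain ⟨g, hg, -, hΔ⟩ := h.exists_majorant
  obtain ⟨C, hC⟩ := exists_norm_periodKernel_le (l := l) (a := -q) (b := -p)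
    (by linarith) (by linarith)
  refine ⟨(2 * Real.pi)⁻¹ * ∫ t, C * g t, fun c hc ζ hζ => ?_⟩
  rw [contourSolution, norm_smul, Real.norm_of_nonneg (by positivity)]
  gcongr
  refine norm_integral_le_of_norm_le (hg.const_mul C) (.of_forall fun t => ?_)
  have hK := hC (c + t * I - ζ) (by constructor <;> simp <;> linarith [hζ.1, hζ.2])
  have hΔt : ‖Δ (c + t * I)‖ ≤ g t := by simpa using hΔ _ (add_mul_I_mem_strip hc t)
  rw [norm_smul]
  exact mul_le_mul hK hΔt (norm_nonneg _) ((norm_nonneg _).trans hK)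

lemma differentiableAt_contourSolution (h : IsDominatedOnStrip Δ A B) (hc : c ∈ Icc A B)
    (hζ : ζ.re ∈ Ioo c (c + l.re)) : DifferentiableAt ℂ (contourSolution l Δ c) ζ := by
  obtain ⟨p, hcp, hpζ⟩ := exists_between hζ.1
  obtain ⟨q, hζq, hql⟩ := exists_between hζ.2
  have hpq : Icc p q ⊆ Ioo c (c + l.re) := Icc_subset_Ioo hcp hql
  obtain ⟨C, hC⟩ := exists_norm_periodKernel_le (l := l) (a := c - q) (b := c - p)
    (by linarith) (by linarith)
  set u := 2 * Real.pi * I / l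
  set K : ℂ → ℝ → ℂ := fun x t => periodKernel l (c + t * I - x)
  have hK'_norm : ∀ x : ℂ, x.re ∈ Icc p q → ∀ t : ℝ, ‖K x t * (K x t + u)‖ ≤ C * (C + ‖u‖) := by
    intro x hx t
    have hKt : ‖K x t‖ ≤ C := hC _ (by constructor <;> simp <;> linarith [hx.1, hx.2])
    rw [norm_mul]
    exact mul_le_mul hKt ((norm_add_le _ _).trans (by gcongr)) (norm_nonneg _)
      ((norm_nonneg _).trans hKt)
  have hΔ_cont := h.continuous_verticalLine hc
  have hK_cont := continuous_periodKernel_verticalLine hζ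
  have hnhds : re ⁻¹' Icc p q ∈ 𝓝 ζ :=
    continuous_re.continuousAt.preimage_mem_nhds (Icc_mem_nhds hpζ hζq)
  refine ((hasDerivAt_integral_of_dominated_loc_of_deriv_le
    (F := fun x (t : ℝ) => K x t • Δ (c + t * I))
    (F' := fun x (t : ℝ) => (K x t * (K x t + u)) • Δ (c + t * I))
    (bound := fun t : ℝ => C * (C + ‖u‖) * ‖Δ (c + t * I)‖) hnhds ?_
    (h.integrable_periodKernel_smul hc hζ) ?_ ?_ ?_ ?_).2.differentiableAt).const_smul _
  · filter_upwards [hnhds] with x hx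
    exact ((continuous_periodKernel_verticalLine (hpq hx)).smul hΔ_cont).aestronglyMeasurable
  · exact ((hK_cont.mul (hK_cont.add_const u)).smul hΔ_cont).aestronglyMeasurable
  · refine .of_forall fun t x hx => ?_
    rw [norm_smul]
    gcongr
    exact hK'_norm x hx t
  · exact (h.integrable_verticalLine hc).norm.const_mul _
  · exact .of_forall fun t x hx =>
      (hasDerivAt_periodKernel_verticalLine (hpq hx) t).smul_const _

lemma contourSolution_congr (h : IsDominatedOnStrip Δ A B) {c' : ℝ} (hc : c ∈ Icc A B)
    (hζ : ζ.re ∈ Ioo c (c + l.re)) (hc' : c' ∈ Icc A B) (hζ' : ζ.re ∈ Ioo c' (c' + l.re)) :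
    contourSolution l Δ c ζ = contourSolution l Δ c' ζ := by
  wlog hcc' : c ≤ c' generalizing c c'
  · exact (this hc' hζ' hc hζ (le_of_not_ge hcc')).symm
  have hl : 0 < l.re := by linarith [hζ.1, hζ.2]
  have hsub : Icc c c' ⊆ Icc A B := Icc_subset_Icc hc.1 hc'.2
  have hK : ∀ z ∈ re ⁻¹' Icc c c', DifferentiableAt ℂ (fun z => periodKernel l (z - ζ)) z := by
    intro z hz
    refine ((hasDerivAt_periodKernel (exp_two_pi_I_div_mul_ne_one_of_re_mem_Ioo
      ?_)).comp_sub_const z ζ).differentiableAt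
    constructor <;> simp <;> linarith [hz.1, hz.2, hζ.2, hζ'.1]
  have hint := h.integrable_periodKernel_smul hc hζ
  have hint' := h.integrable_periodKernel_smul hc' hζ'
  have hzero := integral_verticalLine_sub_eq_zero hcc'
    (f := fun z => periodKernel l (z - ζ) • Δ z)
    (.smul (fun z hz => (hK z hz).continuousAt.continuousWithinAt)
      (h.continuousOn.mono (preimage_mono hsub)))
    (.smul (fun z hz => (hK z (Ioo_subset_Icc_self hz)).differentiableWithinAt)
      (h.differentiableOn.mono (preimage_mono (Ioo_subset_Ioo hc.1 hc'.2))))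
    (h.tendsto_periodKernel_smul hl hsub ζ) (hint'.sub hint)
  rw [integral_sub hint' hint, sub_eq_zero] at hzero
  rw [contourSolution, contourSolution, hzero]

variable [CompleteSpace E]

lemma contourSolution_add_sub_of_symm {δ : ℝ≥0} (h : IsDominatedOnStrip Δ A B) (hδ : δ ≠ 0)
    (hδl : δ < l.re) (hA : A < ζ.re - δ) (hB : ζ.re + δ < B) :
    contourSolution l Δ (ζ.re + δ) (ζ + l) - contourSolution l Δ (ζ.re - δ) ζ = Δ ζ := by
  have hδ_pos : (0 : ℝ) < δ := by positivity
  have hl : 0 < l.re := hδ_pos.trans hδl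
  have hsub : Icc (ζ.re - δ) (ζ.re + δ) ⊆ Icc A B := Icc_subset_Icc hA.le hB.le
  have hK_diff : ∀ z ∈ re ⁻¹' Icc (ζ.re - δ) (ζ.re + δ) \ {ζ},
      DifferentiableAt ℂ (fun z => periodKernel l (z - ζ)) z := fun z hz => by
    refine ((hasDerivAt_periodKernel (exp_two_pi_I_div_mul_ne_one (sub_ne_zero.2 hz.2)
      ?_)).comp_sub_const z ζ).differentiableAt
    rw [sub_re, abs_lt]
    constructor <;> linarith [hz.1.1, hz.1.2]
  have hΔ_cont : ContinuousAt Δ ζ := h.continuousOn.continuousAt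
    (continuous_re.continuousAt.preimage_mem_nhds (Icc_mem_nhds (by linarith) (by linarith)))
  have hl0 : l ≠ 0 := fun h => by simp [h] at hl
  have hperiod : ∀ t : ℝ, periodKernel l ((ζ.re + δ : ℝ) + t * I - (ζ + l)) =
      periodKernel l ((ζ.re + δ : ℝ) + t * I - ζ) := fun t => by
    rw [← sub_sub, (periodKernel_periodic hl0).sub_eq]
  have hint_left := h.integrable_periodKernel_smul (l := l) (ζ := ζ) (c := ζ.re - δ)
    ⟨hA.le, by linarith⟩ ⟨by linarith, by linarith⟩
  have hint_right := h.integrable_periodKernel_smul (l := l) (ζ := ζ + l) (c := ζ.re + δ)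
    ⟨by linarith, hB.le⟩ ⟨by simpa using hδl, by simpa using hδ_pos⟩
  simp_rw [hperiod] at hint_right
  have hjump := integral_verticalLine_sub_eq_of_simplePole hδ
    (f := fun z => periodKernel l (z - ζ) • Δ z)
    (.smul (fun z hz => (hK_diff z hz).continuousAt.continuousWithinAt)
      (h.continuousOn.mono (sdiff_subset.trans (preimage_mono hsub))))
    (.smul (fun z hz => (hK_diff z ⟨Ioo_subset_Icc_self hz.1, hz.2⟩).differentiableWithinAt)
      (h.differentiableOn.mono (sdiff_subset.trans (preimage_mono (Ioo_subset_Ioo hA.le hB.le)))))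
    (tendsto_sub_smul_periodKernel_smul hl0 hΔ_cont)
    (h.tendsto_periodKernel_smul hl hsub ζ) (hint_right.sub hint_left)
  rw [integral_sub hint_right hint_left] at hjump
  simp_rw [contourSolution, hperiod]
  rw [← smul_sub, hjump, inv_smul_smul₀ (by positivity)]

lemma contourSolution_add_sub {c' : ℝ} (h : IsDominatedOnStrip Δ A B) (hζAB : ζ.re ∈ Ioo A B)
    (hc : c ∈ Icc A B) (hζ : ζ.re ∈ Ioo c (c + l.re)) (hc' : c' ∈ Icc A B)
    (hζ' : (ζ + l).re ∈ Ioo c' (c' + l.re)) :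
    contourSolution l Δ c' (ζ + l) - contourSolution l Δ c ζ = Δ ζ := by
  have hl : 0 < l.re := by linarith [hζ.1, hζ.2]
  obtain ⟨δ, hδ, hδ'⟩ := exists_between (lt_min hl (lt_min (sub_pos.2 hζAB.1) (sub_pos.2 hζAB.2)))
  obtain ⟨hδl, hδA, hδB⟩ := lt_min_iff.1 hδ' |>.imp_right lt_min_iff.1
  lift δ to ℝ≥0 using hδ.le
  rw [← h.contourSolution_add_sub_of_symm (by simpa using hδ.ne') hδl (by linarith)
      (by linarith : ζ.re + δ < B),
    h.contourSolution_congr hc hζ (c' := ζ.re - δ) ⟨by linarith, by linarith⟩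
      ⟨by linarith, by linarith⟩,
    h.contourSolution_congr hc' hζ' (c' := ζ.re + δ) ⟨by linarith, by linarith⟩
      ⟨by simpa using hδl, by simpa using hδ⟩]

end IsDominatedOnStrip

end ContourSolution

section OpenStrip

/-- The abscissa of the contour used at the points of abscissa `x`: the affine function of `x`
mapping `[A, B + w]` onto `[A, B]`, which satisfies `contourAbscissa A B w x < x` and
`x < contourAbscissa A B w x + w` for all `x` in the open interval `(A, B + w)`. -/
noncomputable def contourAbscissa (A B w x : ℝ) : ℝ :=
  A + (x - A) * ((B - A) / (B - A + w))

variable {A B w x : ℝ}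

lemma sub_contourAbscissa (hAB : A < B) (hw : 0 < w) :
    x - contourAbscissa A B w x = (x - A) * (w / (B - A + w)) := by
  have : B - A + w ≠ 0 := by linarith
  rw [contourAbscissa]
  field_simp
  ring

lemma contourAbscissa_mem_Icc (hAB : A < B) (hw : 0 < w) (hx : x ∈ Icc A (B + w)) :
    contourAbscissa A B w x ∈ Icc A B := by
  have hlen : 0 < B - A + w := by linarith
  have hle : (x - A) * ((B - A) / (B - A + w)) ≤ B - A := by
    rw [mul_div_assoc', div_le_iff₀ hlen, mul_comm (B - A)]
    exact mul_le_mul_of_nonneg_right (by linarith [hx.2]) (by linarith)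
  have hnonneg : 0 ≤ (x - A) * ((B - A) / (B - A + w)) :=
    mul_nonneg (by linarith [hx.1]) (div_nonneg (by linarith) hlen.le)
  constructor <;> rw [contourAbscissa] <;> linarith

lemma mem_Ioo_contourAbscissa (hAB : A < B) (hw : 0 < w) (hx : x ∈ Ioo A (B + w)) :
    x ∈ Ioo (contourAbscissa A B w x) (contourAbscissa A B w x + w) := by
  have hlen : 0 < B - A + w := by linarith
  have hsub := sub_contourAbscissa (x := x) hAB hw
  have hpos : 0 < (x - A) * (w / (B - A + w)) :=
    mul_pos (by linarith [hx.1]) (div_pos hw hlen)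
  have hlt : (x - A) * (w / (B - A + w)) < w := by
    rw [mul_div_assoc', div_lt_iff₀ hlen, mul_comm w]
    exact mul_lt_mul_of_pos_right (by linarith [hx.2]) hw
  constructor <;> linarith

variable {E : Type*} [NormedAddCommGroup E] [NormedSpace ℂ E] {l : ℂ} {Δ : ℂ → E} {ζ : ℂ}

/-- The solution of `φ (ζ + l) - φ ζ = Δ ζ` in the open strip `A < Re ζ < B + Re l`, obtained by
letting the contour of integration move along with `ζ`. -/
noncomputable def openStripSolution (l : ℂ) (Δ : ℂ → E) (A B : ℝ) (ζ : ℂ) : E :=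
  contourSolution l Δ (contourAbscissa A B l.re ζ.re) ζ

namespace IsDominatedOnStrip

lemma differentiableOn_openStripSolution (h : IsDominatedOnStrip Δ A B) (hAB : A < B)
    (hl : 0 < l.re) :
    DifferentiableOn ℂ (openStripSolution l Δ A B) (re ⁻¹' Ioo A (B + l.re)) := by
  intro ζ hζ
  set c := contourAbscissa A B l.re ζ.re
  have hc : c ∈ Icc A B := contourAbscissa_mem_Icc hAB hl (Ioo_subset_Icc_self hζ)
  have hcζ : ζ.re ∈ Ioo c (c + l.re) := mem_Ioo_contourAbscissa hAB hl hζ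
  refine ((h.differentiableAt_contourSolution hc hcζ).congr_of_eventuallyEq
    ?_).differentiableWithinAt
  filter_upwards [continuous_re.continuousAt.preimage_mem_nhds (Ioo_mem_nhds hζ.1 hζ.2),
    continuous_re.continuousAt.preimage_mem_nhds (Ioo_mem_nhds hcζ.1 hcζ.2)] with z hz hcz
  exact h.contourSolution_congr (contourAbscissa_mem_Icc hAB hl (Ioo_subset_Icc_self hz))
    (mem_Ioo_contourAbscissa hAB hl hz) hc hcz

lemma openStripSolution_add_sub [CompleteSpace E] (h : IsDominatedOnStrip Δ A B) (hl : 0 < l.re)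
    (hζ : ζ.re ∈ Ioo A B) :
    openStripSolution l Δ A B (ζ + l) - openStripSolution l Δ A B ζ = Δ ζ := by
  have hAB : A < B := hζ.1.trans hζ.2
  have hmem : ζ.re ∈ Ioo A (B + l.re) := ⟨hζ.1, by linarith [hζ.2]⟩
  have hmem' : (ζ + l).re ∈ Ioo A (B + l.re) := by
    constructor <;> rw [add_re] <;> linarith [hζ.1, hζ.2]
  exact h.contourSolution_add_sub hζ
    (contourAbscissa_mem_Icc hAB hl (Ioo_subset_Icc_self hmem))
    (mem_Ioo_contourAbscissa hAB hl hmem)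
    (contourAbscissa_mem_Icc hAB hl (Ioo_subset_Icc_self hmem'))
    (mem_Ioo_contourAbscissa hAB hl hmem')

lemma exists_norm_openStripSolution_le (h : IsDominatedOnStrip Δ A B) (hAB : A < B)
    (hl : 0 < l.re) {a b : ℝ} (ha : A < a) (hb : b < B + l.re) :
    ∃ M, ∀ ζ ∈ re ⁻¹' Icc a b, ‖openStripSolution l Δ A B ζ‖ ≤ M := by
  set k := l.re / (B - A + l.re) with hk
  have hlen : 0 < B - A + l.re := by linarith
  have hk_pos : 0 < k := div_pos hl hlen
  have hbk : (b - A) * k < l.re := by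
    rw [hk, mul_div_assoc', div_lt_iff₀ hlen, mul_comm l.re]
    exact mul_lt_mul_of_pos_right (by linarith) hl
  obtain ⟨M, hM⟩ := h.exists_norm_contourSolution_le (mul_pos (sub_pos.2 ha) hk_pos) hbk
  refine ⟨M, fun ζ hζ => hM _
    (contourAbscissa_mem_Icc hAB hl ⟨ha.le.trans hζ.1, hζ.2.trans hb.le⟩) ζ ?_⟩
  rw [sub_contourAbscissa hAB hl]
  exact ⟨mul_le_mul_of_nonneg_right (by linarith [hζ.1]) hk_pos.le,
    mul_le_mul_of_nonneg_right (by linarith [hζ.2]) hk_pos.le⟩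

end IsDominatedOnStrip

end OpenStrip

section ClosedStrip

variable {E : Type*} [NormedAddCommGroup E] {l : ℂ} {Δ φ φ₀ : ℂ → E} {A B : ℝ} {ζ : ℂ}

/-- The extension of a solution `φ₀` of `φ (ζ + l) - φ ζ = Δ ζ` from the open strip
`A < Re ζ < B + Re l` to the closed one: on a boundary line its value is the one that the equation
prescribes from the value of `φ₀` at the translate lying inside the strip. -/
noncomputable def closedStripExtension (l : ℂ) (Δ : ℂ → E) (A B : ℝ) (φ₀ : ℂ → E) (ζ : ℂ) : E :=
  if ζ.re ≤ A then φ₀ (ζ + l) - Δ ζ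
  else if B + l.re ≤ ζ.re then φ₀ (ζ - l) + Δ (ζ - l)
  else φ₀ ζ

lemma closedStripExtension_of_mem_Ioo (hζ : ζ.re ∈ Ioo A (B + l.re)) :
    closedStripExtension l Δ A B φ₀ ζ = φ₀ ζ := by
  rw [closedStripExtension, if_neg hζ.1.not_ge, if_neg hζ.2.not_ge]

lemma closedStripExtension_of_mem_Ico (hl : 0 < l.re)
    (h_eq : ∀ ζ ∈ re ⁻¹' Ioo A B, φ₀ (ζ + l) - φ₀ ζ = Δ ζ) (hζ : ζ.re ∈ Ico A B) :
    closedStripExtension l Δ A B φ₀ ζ = φ₀ (ζ + l) - Δ ζ := by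
  rcases hζ.1.eq_or_lt with hA | hA
  · rw [closedStripExtension, if_pos hA.ge]
  · rw [closedStripExtension_of_mem_Ioo ⟨hA, by linarith [hζ.2]⟩, ← h_eq ζ ⟨hA, hζ.2⟩,
      sub_sub_cancel]

lemma closedStripExtension_of_mem_Ioc (hl : 0 < l.re)
    (h_eq : ∀ ζ ∈ re ⁻¹' Ioo A B, φ₀ (ζ + l) - φ₀ ζ = Δ ζ)
    (hζ : ζ.re ∈ Ioc (A + l.re) (B + l.re)) :
    closedStripExtension l Δ A B φ₀ ζ = φ₀ (ζ - l) + Δ (ζ - l) := by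
  have hA : A < ζ.re := by linarith [hζ.1]
  rcases hζ.2.eq_or_lt with hB | hB
  · rw [closedStripExtension, if_neg hA.not_ge, if_pos hB.ge]
  · have hζl : ζ - l ∈ re ⁻¹' Ioo A B := by
      constructor <;> rw [sub_re] <;> linarith [hζ.1]
    rw [closedStripExtension_of_mem_Ioo ⟨hA, hB⟩, ← h_eq _ hζl, add_sub_cancel, sub_add_cancel]

lemma continuousOn_closedStripExtension (hAB : A < B) (hl : 0 < l.re)
    (hφ₀ : ContinuousOn φ₀ (re ⁻¹' Ioo A (B + l.re))) (hΔ : ContinuousOn Δ (re ⁻¹' Icc A B))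
    (h_eq : ∀ ζ ∈ re ⁻¹' Ioo A B, φ₀ (ζ + l) - φ₀ ζ = Δ ζ) :
    ContinuousOn (closedStripExtension l Δ A B φ₀) (re ⁻¹' Icc A (B + l.re)) := by
  have hmid : ContinuousOn (closedStripExtension l Δ A B φ₀) (re ⁻¹' Ioo A (B + l.re)) :=
    hφ₀.congr fun z hz => closedStripExtension_of_mem_Ioo hz
  have hleft : ContinuousOn (closedStripExtension l Δ A B φ₀) (re ⁻¹' Ico A B) := by
    refine ContinuousOn.congr (.sub (hφ₀.comp (by fun_prop) fun z hz => ?_)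
      (hΔ.mono (preimage_mono Ico_subset_Icc_self)))
      fun z hz => closedStripExtension_of_mem_Ico hl h_eq hz
    constructor <;> rw [add_re] <;> linarith [hz.1, hz.2]
  have hright : ContinuousOn (closedStripExtension l Δ A B φ₀)
      (re ⁻¹' Ioc (A + l.re) (B + l.re)) := by
    refine ContinuousOn.congr (.add (hφ₀.comp (by fun_prop) fun z hz => ?_)
      (hΔ.comp (by fun_prop) fun z hz => ?_))
      fun z hz => closedStripExtension_of_mem_Ioc hl h_eq hz
    all_goals constructor <;> rw [sub_re] <;> linarith [hz.1, hz.2]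
  refine continuousOn_of_locally_continuousOn fun ζ hζ => ?_
  rcases lt_or_ge ζ.re B with hB | hB
  · exact ⟨re ⁻¹' Iio B, isOpen_Iio.preimage continuous_re, hB,
      hleft.mono fun z hz => ⟨hz.1.1, hz.2⟩⟩
  · rcases hζ.2.lt_or_eq with hBl | hBl
    · exact ⟨re ⁻¹' Ioo A (B + l.re), isOpen_Ioo.preimage continuous_re, ⟨hAB.trans_le hB, hBl⟩,
        hmid.mono inter_subset_right⟩
    · exact ⟨re ⁻¹' Ioi (A + l.re), isOpen_Ioi.preimage continuous_re,
        by rw [mem_preimage, hBl, mem_Ioi]; linarith, hright.mono fun z hz => ⟨hz.2, hz.1.2⟩⟩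

lemma exists_norm_closedStripExtension_le (hAB : A < B) (hl : 0 < l.re)
    (hφ₀ : ∀ a b, A < a → b < B + l.re → ∃ M, ∀ ζ ∈ re ⁻¹' Icc a b, ‖φ₀ ζ‖ ≤ M)
    (hΔ : ∃ M, ∀ ζ ∈ re ⁻¹' Icc A B, ‖Δ ζ‖ ≤ M)
    (h_eq : ∀ ζ ∈ re ⁻¹' Ioo A B, φ₀ (ζ + l) - φ₀ ζ = Δ ζ) :
    ∃ M, ∀ ζ ∈ re ⁻¹' Icc A (B + l.re), ‖closedStripExtension l Δ A B φ₀ ζ‖ ≤ M := by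
  obtain ⟨e, hAe, heB⟩ := exists_between hAB
  obtain ⟨N, hN⟩ := hΔ
  obtain ⟨M₁, hM₁⟩ := hφ₀ (A + l.re) (e + l.re) (by linarith) (by linarith)
  obtain ⟨M₂, hM₂⟩ := hφ₀ e (e + l.re) hAe (by linarith)
  obtain ⟨M₃, hM₃⟩ := hφ₀ e B hAe (by linarith)
  refine ⟨max (M₁ + N) (max M₂ (M₃ + N)), fun ζ hζ => ?_⟩
  rcases le_or_gt ζ.re e with hζe | hζe
  · rw [closedStripExtension_of_mem_Ico hl h_eq ⟨hζ.1, hζe.trans_lt heB⟩]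
    refine (norm_sub_le_of_le (hM₁ _ ?_) (hN _ ⟨hζ.1, hζe.trans heB.le⟩)).trans (le_max_left _ _)
    constructor <;> rw [add_re] <;> linarith [hζ.1]
  refine le_max_of_le_right ?_
  rcases le_or_gt ζ.re (e + l.re) with hζel | hζel
  · rw [closedStripExtension_of_mem_Ioo ⟨by linarith, by linarith⟩]
    exact le_max_of_le_left (hM₂ _ ⟨hζe.le, hζel⟩)
  · rw [closedStripExtension_of_mem_Ioc hl h_eq ⟨by linarith, hζ.2⟩]
    refine (norm_add_le_of_le (hM₃ _ ?_) (hN _ ?_)).trans (le_max_right _ _)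
    all_goals constructor <;> rw [sub_re] <;> linarith [hζ.2]

lemma closedStripExtension_add_sub (hl : 0 < l.re)
    (h_eq : ∀ ζ ∈ re ⁻¹' Ioo A B, φ₀ (ζ + l) - φ₀ ζ = Δ ζ) (hAB : A < B) (hζ : ζ.re ∈ Icc A B) :
    closedStripExtension l Δ A B φ₀ (ζ + l) - closedStripExtension l Δ A B φ₀ ζ = Δ ζ := by
  rcases hζ.2.eq_or_lt with hB | hB
  · have hζl : (ζ + l).re ∈ Ioc (A + l.re) (B + l.re) := by
      constructor <;> rw [add_re] <;> linarith
    rw [closedStripExtension_of_mem_Ioc hl h_eq hζl, add_sub_cancel_right,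
      closedStripExtension_of_mem_Ioo ⟨by linarith, by linarith⟩, add_sub_cancel_left]
  · have hζl : (ζ + l).re ∈ Ioo A (B + l.re) := by
      constructor <;> rw [add_re] <;> linarith [hζ.1]
    rw [closedStripExtension_of_mem_Ico hl h_eq ⟨hζ.1, hB⟩, closedStripExtension_of_mem_Ioo hζl,
      sub_sub_cancel]

variable [NormedSpace ℂ E]

/-- `φ` is a bounded holomorphic solution of `φ (ζ + l) - φ ζ = Δ ζ` for `A ≤ Re ζ ≤ B`. As a
function it is considered on the closed strip `A ≤ Re ζ ≤ B + Re l`, which contains both `ζ` and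
`ζ + l`. -/
structure IsBoundedSolution (l : ℂ) (Δ : ℂ → E) (A B : ℝ) (φ : ℂ → E) : Prop where
  continuousOn : ContinuousOn φ (re ⁻¹' Icc A (B + l.re))
  differentiableOn : DifferentiableOn ℂ φ (re ⁻¹' Ioo A (B + l.re))
  exists_norm_le : ∃ M, ∀ ζ ∈ re ⁻¹' Icc A (B + l.re), ‖φ ζ‖ ≤ M
  add_sub : ∀ ζ ∈ re ⁻¹' Icc A B, φ (ζ + l) - φ ζ = Δ ζ

lemma IsDominatedOnStrip.exists_isBoundedSolution [CompleteSpace E]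
    (h : IsDominatedOnStrip Δ A B) (hAB : A < B) (hl : 0 < l.re) :
    ∃ φ, IsBoundedSolution l Δ A B φ := by
  have hdiff := h.differentiableOn_openStripSolution hAB hl
  have h_eq : ∀ ζ ∈ re ⁻¹' Ioo A B, _ = Δ ζ := fun ζ hζ => h.openStripSolution_add_sub hl hζ
  exact ⟨closedStripExtension l Δ A B (openStripSolution l Δ A B),
    { continuousOn :=
        continuousOn_closedStripExtension hAB hl hdiff.continuousOn h.continuousOn h_eq
      differentiableOn := hdiff.congr fun ζ hζ => closedStripExtension_of_mem_Ioo hζ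
      exists_norm_le := exists_norm_closedStripExtension_le hAB hl
        (fun _ _ ha hb => h.exists_norm_openStripSolution_le hAB hl ha hb) h.exists_norm_le h_eq
      add_sub := fun ζ hζ => closedStripExtension_add_sub hl h_eq hAB hζ }⟩

lemma IsBoundedSolution.sub {Δ' φ' : ℂ → E} (hφ : IsBoundedSolution l Δ A B φ)
    (hφ' : IsBoundedSolution l Δ' A B φ') : IsBoundedSolution l (Δ - Δ') A B (φ - φ') where
  continuousOn := hφ.continuousOn.sub hφ'.continuousOn
  differentiableOn := hφ.differentiableOn.sub hφ'.differentiableOn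
  exists_norm_le := by
    obtain ⟨M, hM⟩ := hφ.exists_norm_le
    obtain ⟨M', hM'⟩ := hφ'.exists_norm_le
    exact ⟨M + M', fun ζ hζ => norm_sub_le_of_le (hM ζ hζ) (hM' ζ hζ)⟩
  add_sub ζ hζ := by
    simp only [Pi.sub_apply]
    rw [← hφ.add_sub ζ hζ, ← hφ'.add_sub ζ hζ]
    abel

namespace IsBoundedSolution

lemma apply_add_natCast_mul (h : IsBoundedSolution l 0 A B φ) (hl : 0 < l.re) (n : ℕ)
    (hζ : A ≤ ζ.re) (hζn : ζ.re + n * l.re ≤ B + l.re) : φ (ζ + n * l) = φ ζ := by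
  induction n with
  | zero => simp
  | succ n ih =>
    push_cast at hζn ⊢
    have hstrip : ζ + n * l ∈ re ⁻¹' Icc A B := by
      constructor <;> simp <;> nlinarith
    rw [add_one_mul, ← add_assoc, sub_eq_zero.1 (h.add_sub _ hstrip), ih (by linarith)]

lemma apply_add_intCast_mul (h : IsBoundedSolution l 0 A B φ) (hl : 0 < l.re) (n : ℤ)
    (hζ : ζ.re ∈ Icc A (B + l.re)) (hζn : (ζ + n * l).re ∈ Icc A (B + l.re)) :
    φ (ζ + n * l) = φ ζ := by
  obtain ⟨k, rfl | rfl⟩ := n.eq_nat_or_neg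
  · simpa using h.apply_add_natCast_mul hl k hζ.1 (by simpa using hζn.2)
  · simpa using (h.apply_add_natCast_mul hl k hζn.1 (by simpa using hζ.2)).symm

end IsBoundedSolution

/-- The extension of `φ` from the half-open strip `a ≤ Re ζ < a + Re l` to an `l`-periodic
function on the plane. -/
noncomputable def periodicExtension (hl : 0 < l.re) (a : ℝ) (φ : ℂ → E) (ζ : ℂ) : E :=
  φ (ζ - toIcoDiv hl a ζ.re * l)

lemma re_sub_toIcoDiv_mul_mem_Ico (hl : 0 < l.re) (a : ℝ) (ζ : ℂ) :
    (ζ - toIcoDiv hl a ζ.re * l).re ∈ Ico a (a + l.re) := by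
  simpa using sub_toIcoDiv_zsmul_mem_Ico hl a ζ.re

namespace IsBoundedSolution

lemma periodicExtension_eq {a : ℝ} (h : IsBoundedSolution l 0 A B φ) (hl : 0 < l.re)
    (ha : a ∈ Icc A B) (n : ℤ) (hζ : (ζ - n * l).re ∈ Icc A (B + l.re)) :
    periodicExtension hl a φ ζ = φ (ζ - n * l) := by
  have hmem : (ζ - toIcoDiv hl a ζ.re * l).re ∈ Icc A (B + l.re) := by
    have hIco := re_sub_toIcoDiv_mul_mem_Ico hl a ζ
    exact ⟨ha.1.trans hIco.1, hIco.2.le.trans (by linarith [ha.2])⟩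
  have hshift : ζ - n * l + (n - toIcoDiv hl a ζ.re : ℤ) * l = ζ - toIcoDiv hl a ζ.re * l := by
    push_cast
    ring
  rw [periodicExtension, ← hshift]
  exact h.apply_add_intCast_mul hl _ hζ (hshift ▸ hmem)

lemma differentiable_periodicExtension {a : ℝ} (h : IsBoundedSolution l 0 A B φ) (hl : 0 < l.re)
    (ha : a ∈ Ioo A B) : Differentiable ℂ (periodicExtension hl a φ) := by
  intro ζ
  set n := toIcoDiv hl a ζ.re
  have hmem : ζ - n * l ∈ re ⁻¹' Ioo A (B + l.re) := by
    have hIco := re_sub_toIcoDiv_mul_mem_Ico hl a ζ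
    exact ⟨ha.1.trans_le hIco.1, hIco.2.trans (by linarith [ha.2])⟩
  have hnhds : re ⁻¹' Ioo A (B + l.re) ∈ 𝓝 (ζ - n * l) :=
    (isOpen_Ioo.preimage continuous_re).mem_nhds hmem
  refine (differentiableAt_comp_sub_const.2
    (h.differentiableOn.differentiableAt hnhds)).congr_of_eventuallyEq ?_
  filter_upwards [(continuous_sub_right (n * l)).continuousAt.preimage_mem_nhds hnhds] with z hz
  exact h.periodicExtension_eq hl (Ioo_subset_Icc_self ha) n (Ioo_subset_Icc_self hz)

lemma exists_eq_const (h : IsBoundedSolution l 0 A B φ) (hAB : A < B) (hl : 0 < l.re) :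
    ∃ c, ∀ ζ ∈ re ⁻¹' Icc A (B + l.re), φ ζ = c := by
  obtain ⟨a, ha⟩ := exists_between hAB
  obtain ⟨M, hM⟩ := h.exists_norm_le
  have hbdd : IsBounded (range (periodicExtension hl a φ)) := by
    refine isBounded_iff_forall_norm_le.2 ⟨M, forall_mem_range.2 fun ζ => hM _ ?_⟩
    have hIco := re_sub_toIcoDiv_mul_mem_Ico hl a ζ
    exact ⟨ha.1.le.trans hIco.1, hIco.2.le.trans (by linarith [ha.2])⟩
  refine ⟨periodicExtension hl a φ 0, fun ζ hζ => ?_⟩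
  rw [← (h.differentiable_periodicExtension hl ha).apply_eq_apply_of_bounded hbdd ζ 0,
    h.periodicExtension_eq hl ⟨ha.1.le, ha.2.le⟩ 0 (by simpa using hζ)]
  simp

end IsBoundedSolution

end ClosedStrip

section PowerDecay

section

variable {F : Type*} [SeminormedAddCommGroup F] {f : ℂ → F} {M p : ℝ}

lemma one_add_abs_im_rpow_mul_norm_le {z : ℂ} (hp : 0 ≤ p) (hz : 1 ≤ ‖z‖)
    (hf : ‖f z‖ * ‖z‖ ^ p ≤ M) : (1 + |z.im|) ^ p * ‖f z‖ ≤ 2 ^ p * M := by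
  calc (1 + |z.im|) ^ p * ‖f z‖ ≤ (2 * ‖z‖) ^ p * ‖f z‖ := by
        gcongr
        linarith [abs_im_le_norm z]
    _ = 2 ^ p * (‖f z‖ * ‖z‖ ^ p) := by
        rw [Real.mul_rpow zero_le_two (norm_nonneg z)]
        ring
    _ ≤ 2 ^ p * M := by gcongr

lemma exists_norm_le_mul_one_add_abs_im_rpow_neg {A B : ℝ} (hp : 0 ≤ p)
    (hf : ContinuousOn f (re ⁻¹' Icc A B)) (hM : ∀ z ∈ re ⁻¹' Icc A B, ‖f z‖ * ‖z‖ ^ p ≤ M) :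
    ∃ C, ∀ z ∈ re ⁻¹' Icc A B, ‖f z‖ ≤ C * (1 + |z.im|) ^ (-p) := by
  have hnorm (z : ℂ) : ‖(1 + |z.im|) ^ p * ‖f z‖‖ = (1 + |z.im|) ^ p * ‖f z‖ :=
    Real.norm_of_nonneg (by positivity)
  have hweight : Continuous fun z : ℂ => (1 + |z.im|) ^ p :=
    (continuous_const.add continuous_im.abs).rpow_const fun _ => .inr hp
  have hfar : ∀ᶠ z in cobounded ℂ ⊓ 𝓟 (re ⁻¹' Icc A B),
      ‖(1 + |z.im|) ^ p * ‖f z‖‖ ≤ 2 ^ p * M := by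
    filter_upwards [mem_inf_of_right (mem_principal_self _),
      mem_inf_of_left (tendsto_norm_cobounded_atTop.eventually_ge_atTop 1)] with z hz hz_one
    rw [hnorm]
    exact one_add_abs_im_rpow_mul_norm_le hp hz_one (hM z hz)
  obtain ⟨C, hC⟩ := exists_norm_le_of_eventually_cobounded
    (isClosed_Icc.preimage continuous_re) (hweight.continuousOn.mul hf.norm) hfar
  refine ⟨C, fun z hz => ?_⟩
  rw [Real.rpow_neg (by positivity), ← div_eq_mul_inv, le_div_iff₀' (by positivity), ← hnorm]
  exact hC z hz

end

variable {E : Type*} [NormedAddCommGroup E] [NormedSpace ℂ E] {l : ℂ} {Δ φ : ℂ → E} {A B p : ℝ}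

lemma IsDominatedOnStrip.of_norm_mul_rpow_le (hp : 1 < p) (hcont : ContinuousOn Δ (re ⁻¹' Icc A B))
    (hdiff : DifferentiableOn ℂ Δ (re ⁻¹' Ioo A B))
    (hdecay : ∃ M, ∀ z ∈ re ⁻¹' Icc A B, ‖Δ z‖ * ‖z‖ ^ p ≤ M) : IsDominatedOnStrip Δ A B := by
  have hp_pos : 0 < p := one_pos.trans hp
  obtain ⟨M, hM⟩ := hdecay
  obtain ⟨C, hC⟩ := exists_norm_le_mul_one_add_abs_im_rpow_neg hp_pos.le hcont hM
  refine ⟨hcont, hdiff, fun t => C * (1 + |t|) ^ (-p), ?_, ?_, hC⟩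
  · exact (integrable_one_add_norm (by simpa using hp)).const_mul C
  · simpa using ((tendsto_rpow_neg_atTop hp_pos).comp (tendsto_atTop_add_const_left _ 1
      (tendsto_norm_cobounded_atTop (E := ℝ)))).const_mul C

lemma interior_re_preimage_Icc (a b : ℝ) : interior (re ⁻¹' Icc a b) = re ⁻¹' Ioo a b := by
  rw [interior_preimage_re, interior_Icc]

lemma isBoundedSolution_iff {w : ℝ} (hw : l.re = w) :
    IsBoundedSolution l Δ A B φ ↔
      ContinuousOn φ {ζ : ℂ | A ≤ ζ.re ∧ ζ.re ≤ B + w} ∧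
      DifferentiableOn ℂ φ (interior {ζ : ℂ | A ≤ ζ.re ∧ ζ.re ≤ B + w}) ∧
      (∃ M : ℝ, ∀ ζ : ℂ, A ≤ ζ.re → ζ.re ≤ B + w → ‖φ ζ‖ ≤ M) ∧
      ∀ ζ : ℂ, A ≤ ζ.re → ζ.re ≤ B → φ (ζ + l) - φ ζ = Δ ζ := by
  subst hw
  have hint : interior {ζ : ℂ | A ≤ ζ.re ∧ ζ.re ≤ B + l.re} = re ⁻¹' Ioo A (B + l.re) :=
    interior_re_preimage_Icc A (B + l.re)
  rw [hint]
  exact ⟨fun h => ⟨h.continuousOn, h.differentiableOn,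
      h.exists_norm_le.imp fun M hM ζ hA hB => hM ζ ⟨hA, hB⟩,
      fun ζ hA hB => h.add_sub ζ ⟨hA, hB⟩⟩,
    fun ⟨hc, hd, hb, he⟩ => ⟨hc, hd, hb.imp fun M hM ζ hζ => hM ζ hζ.1 hζ.2,
      fun ζ hζ => he ζ hζ.1 hζ.2⟩⟩

theorem statement10_general [CompleteSpace E] (hAB : A < B) (hl : 0 < l.re) (hp : 1 < p)
    (hcont : ContinuousOn Δ (re ⁻¹' Icc A B)) (hdiff : DifferentiableOn ℂ Δ (re ⁻¹' Ioo A B))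
    (hdecay : ∃ M, ∀ ζ ∈ re ⁻¹' Icc A B, ‖Δ ζ‖ * ‖ζ‖ ^ p ≤ M) :
    (∃ φ, IsBoundedSolution l Δ A B φ) ∧
      ∀ φ φ', IsBoundedSolution l Δ A B φ → IsBoundedSolution l Δ A B φ' →
        ∃ c, ∀ ζ ∈ re ⁻¹' Icc A (B + l.re), φ' ζ = φ ζ + c := by
  refine ⟨(IsDominatedOnStrip.of_norm_mul_rpow_le hp hcont hdiff hdecay).exists_isBoundedSolution
    hAB hl, fun φ φ' hφ hφ' => ?_⟩
  obtain ⟨c, hc⟩ := (sub_self Δ ▸ hφ'.sub hφ).exists_eq_const hAB hl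
  exact ⟨c, fun ζ hζ => eq_add_of_sub_eq' (hc ζ hζ)⟩

end PowerDecay

end

/-- existence and uniqueness (up to an additive constant) of a bounded
holomorphic solution `φ` on the strip `{A ≤ Re ζ ≤ B + λ₁}` of the difference equation
`φ(ζ+λ) − φ(ζ) = Δ(ζ)` on `{A ≤ Re ζ ≤ B}`, for `Δ` holomorphic on that strip with
`sup |Δ(ζ)|·|ζ|^m < ∞`, `m ≥ 3`; here `λ = −2πiτ`, `λ₁ = Re λ = 2π·Im τ > 0`. -/
theorem statement10 (τ : ℂ) (hτ : 0 < τ.im) (A B : ℝ)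
    (hAB : A + 2 * Real.pi * τ.im < B) (hB : B ≤ 1)
    (m : ℕ) (hm : 3 ≤ m)
    (Δ : ℂ → ℂ)
    (hcont : ContinuousOn Δ {ζ : ℂ | A ≤ ζ.re ∧ ζ.re ≤ B})
    (hdiff : DifferentiableOn ℂ Δ (interior {ζ : ℂ | A ≤ ζ.re ∧ ζ.re ≤ B}))
    (hnorm : ∃ M : ℝ, ∀ ζ : ℂ, A ≤ ζ.re → ζ.re ≤ B →
      ‖Δ ζ‖ * ‖ζ‖ ^ m ≤ M) :
    (∃ φ : ℂ → ℂ,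
      ContinuousOn φ {ζ : ℂ | A ≤ ζ.re ∧ ζ.re ≤ B + 2 * Real.pi * τ.im} ∧
      DifferentiableOn ℂ φ
        (interior {ζ : ℂ | A ≤ ζ.re ∧ ζ.re ≤ B + 2 * Real.pi * τ.im}) ∧
      (∃ M : ℝ, ∀ ζ : ℂ, A ≤ ζ.re → ζ.re ≤ B + 2 * Real.pi * τ.im →
        ‖φ ζ‖ ≤ M) ∧
      (∀ ζ : ℂ, A ≤ ζ.re → ζ.re ≤ B →
        φ (ζ + (-(2 * (Real.pi : ℂ) * Complex.I * τ))) - φ ζ = Δ ζ)) ∧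
    (∀ φ φ' : ℂ → ℂ,
      ContinuousOn φ {ζ : ℂ | A ≤ ζ.re ∧ ζ.re ≤ B + 2 * Real.pi * τ.im} →
      DifferentiableOn ℂ φ
        (interior {ζ : ℂ | A ≤ ζ.re ∧ ζ.re ≤ B + 2 * Real.pi * τ.im}) →
      (∃ M : ℝ, ∀ ζ : ℂ, A ≤ ζ.re → ζ.re ≤ B + 2 * Real.pi * τ.im →
        ‖φ ζ‖ ≤ M) →
      (∀ ζ : ℂ, A ≤ ζ.re → ζ.re ≤ B →
        φ (ζ + (-(2 * (Real.pi : ℂ) * Complex.I * τ))) - φ ζ = Δ ζ) →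
      ContinuousOn φ' {ζ : ℂ | A ≤ ζ.re ∧ ζ.re ≤ B + 2 * Real.pi * τ.im} →
      DifferentiableOn ℂ φ'
        (interior {ζ : ℂ | A ≤ ζ.re ∧ ζ.re ≤ B + 2 * Real.pi * τ.im}) →
      (∃ M : ℝ, ∀ ζ : ℂ, A ≤ ζ.re → ζ.re ≤ B + 2 * Real.pi * τ.im →
        ‖φ' ζ‖ ≤ M) →
      (∀ ζ : ℂ, A ≤ ζ.re → ζ.re ≤ B →
        φ' (ζ + (-(2 * (Real.pi : ℂ) * Complex.I * τ))) - φ' ζ = Δ ζ) →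
      ∃ c : ℂ, ∀ ζ : ℂ, A ≤ ζ.re → ζ.re ≤ B + 2 * Real.pi * τ.im →
        φ' ζ = φ ζ + c) := by
  set l := -(2 * (Real.pi : ℂ) * Complex.I * τ)
  have hl : l.re = 2 * Real.pi * τ.im := by simp [l]
  have hlen : 0 < 2 * Real.pi * τ.im := by positivity
  have h := statement10_general (l := l) (p := m) (by linarith) (hl ▸ hlen) (by norm_cast; lia)
    hcont (interior_re_preimage_Icc A B ▸ hdiff) (by simpa [and_imp] using hnorm)
  simpa only [isBoundedSolution_iff hl, Set.mem_preimage, Set.mem_Icc, hl, and_imp] using h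
end

section
/- Define φ(X,Y) := (X·(1+XY), Y·(1+X²Y)) on a neighborhood of (0,0) in ℂ². Given α, β ∈ ℂ and holomorphic germs f₁, f₄ : {w ∈ ℂ : |w| < ρ₀} → ℂ, define on a punctured bidisc the functions P₁(X,Y) := α/X, Q₁(X,Y) := β/Y + f₁(Y), P₄(X,Y) := α/X + f₄(X), Q₄(X,Y) := β/Y, and the pullback components P̃₁ := P₁(φ(X,Y))·(1+2XY) + Q₁(φ(X,Y))·(2XY²) and Q̃₁ := P₁(φ(X,Y))·X² + Q₁(φ(X,Y))·(1+2X²Y) (these are the coefficients of φ*(P₁dX + Q₁dY) via the Jacobian of φ). If there exists ρ > 0 such that P₄(X,Y)·Q̃₁(X,Y) − Q₄(X,Y)·P̃₁(X,Y) = 0 for all (X,Y) with 0 < |X| < ρ and 0 < |Y| < ρ, then α = 0 and β = 0. (Consequently, for the neighborhood glued by the cocycle with φ_{1,4} = φ, every formal foliation of the pencil diverges.) -/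
open Complex

/-!
Fix a small `X ≠ 0`. After clearing denominators, the wedge becomes a function of `Y` that is
continuous at `0`; expand it there to first order. The constant term is `β X f₄(X)`, so `β ≠ 0`
forces `f₄ = 0` near `0`.

If `β ≠ 0`, the linear term is thus a polynomial in `X` with coefficients `α f₁(0)`, `α (α - β)`
and `β (α - 2 β)`, which cannot all vanish. If `β = 0`, the linear term is
`(α + X f₄(X)) (f₁(0) + α X)`. Its first factor tends to `α`, so `α ≠ 0` would force the second
factor to vanish near `0`, and hence `α = 0`.
-/

open Filter Topology

lemma eventually_nhdsNE_zero_norm_pos_and_lt {E : Type*} [NormedAddCommGroup E] {ρ : ℝ}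
    (hρ : 0 < ρ) : ∀ᶠ x : E in 𝓝[≠] 0, 0 < ‖x‖ ∧ ‖x‖ < ρ := by
  filter_upwards [self_mem_nhdsWithin, nhdsWithin_le_nhds (Metric.ball_mem_nhds 0 hρ)] with x hx hxρ
  exact ⟨norm_pos_iff.2 hx, mem_ball_zero_iff.1 hxρ⟩

lemma eventually_eventually_nhdsNE_of_punctured_bidisc {E F : Type*} [NormedAddCommGroup E]
    [NormedAddCommGroup F] {p : E → F → Prop} {ρ : ℝ} (hρ : 0 < ρ)
    (h : ∀ x y, 0 < ‖x‖ → ‖x‖ < ρ → 0 < ‖y‖ → ‖y‖ < ρ → p x y) :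
    ∀ᶠ x in 𝓝[≠] 0, ∀ᶠ y in 𝓝[≠] 0, p x y := by
  filter_upwards [eventually_nhdsNE_zero_norm_pos_and_lt hρ] with x hx
  filter_upwards [eventually_nhdsNE_zero_norm_pos_and_lt hρ] with y hy
  exact h x y hx.1 hx.2 hy.1 hy.2

section Expansion

variable {𝕜 : Type*} [NontriviallyNormedField 𝕜]

lemma eq_zero_of_eventually_nhdsNE_eq_zero {g : 𝕜 → 𝕜} {z : 𝕜} (hg : ContinuousAt g z)
    (h : ∀ᶠ w in 𝓝[≠] z, g w = 0) : g z = 0 :=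
  ((hg.eventuallyEq_nhds_iff_eventuallyEq_nhdsNE continuousAt_const).1 h).eq_of_nhds

lemma eq_zero_and_eventually_eq_zero_of_add_mul_eq_zero {c : 𝕜} {R : 𝕜 → 𝕜}
    (hR : ContinuousAt R 0) (h : ∀ᶠ w in 𝓝[≠] 0, c + w * R w = 0) :
    c = 0 ∧ ∀ᶠ w in 𝓝[≠] 0, R w = 0 := by
  have hc : c = 0 := by
    simpa using eq_zero_of_eventually_nhdsNE_eq_zero (g := fun w => c + w * R w) (by fun_prop) h
  refine ⟨hc, ?_⟩
  filter_upwards [h, self_mem_nhdsWithin] with w hw hw0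
  simpa [hc, show w ≠ 0 from hw0] using hw

lemma quadratic_coeffs_eq_zero {a b c : 𝕜} (h : ∀ᶠ w in 𝓝[≠] 0, a + w * (b + w * c) = 0) :
    a = 0 ∧ b = 0 ∧ c = 0 := by
  obtain ⟨ha, h⟩ := eq_zero_and_eventually_eq_zero_of_add_mul_eq_zero (by fun_prop) h
  obtain ⟨hb, h⟩ := eq_zero_and_eventually_eq_zero_of_add_mul_eq_zero continuousAt_const h
  exact ⟨ha, hb, eventually_const.1 h⟩

end Expansion

section Wedge

variable {𝕜 : Type*}

/-- The coefficient `P₄ Q̃₁ - Q₄ P̃₁` of `dX ∧ dY` in `θ₄ ∧ φ*θ₁`, where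
`θ₁ = (α/X) dX + (β/Y + f₁(Y)) dY`, `θ₄ = (α/X + f₄(X)) dX + (β/Y) dY` and
`φ(X, Y) = (X (1 + X Y), Y (1 + X² Y))`. It is meant for small nonzero `X` and `Y`, where no
denominator vanishes. -/
def pullbackWedge [Field 𝕜] (α β : 𝕜) (f₁ f₄ : 𝕜 → 𝕜) (X Y : 𝕜) : 𝕜 :=
  (α / X + f₄ X) *
      ((α / (X * (1 + X * Y))) * X ^ 2 +
        (β / (Y * (1 + X ^ 2 * Y)) + f₁ (Y * (1 + X ^ 2 * Y))) * (1 + 2 * X ^ 2 * Y)) -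
    (β / Y) *
      ((α / (X * (1 + X * Y))) * (1 + 2 * X * Y) +
        (β / (Y * (1 + X ^ 2 * Y)) + f₁ (Y * (1 + X ^ 2 * Y))) * (2 * X * Y ^ 2))

/-- The first-order remainder in `Y` of `pullbackWedge` after clearing denominators: the numerator
is `β X f₄(X) + Y * wedgeRemainder α β f₁ f₄ X Y`. -/
def wedgeRemainder [CommRing 𝕜] (α β : 𝕜) (f₁ f₄ : 𝕜 → 𝕜) (X Y : 𝕜) : 𝕜 :=
  (α + X * f₄ X) *
      (α * X * (1 + X ^ 2 * Y) + β * (X + 2 * X ^ 2 + 2 * X ^ 3 * Y) +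
        (1 + X ^ 2 * Y) * f₁ (Y * (1 + X ^ 2 * Y)) * ((1 + 2 * X ^ 2 * Y) * (1 + X * Y))) -
    β *
      (α * (2 * X + X ^ 2 + 2 * X ^ 3 * Y) +
        2 * (β + Y * (1 + X ^ 2 * Y) * f₁ (Y * (1 + X ^ 2 * Y))) * (X ^ 2 * (1 + X * Y)))

lemma mul_pullbackWedge [Field 𝕜] (α β : 𝕜) (f₁ f₄ : 𝕜 → 𝕜) {X Y : 𝕜} (hX : X ≠ 0) (hY : Y ≠ 0)
    (hXY : 1 + X * Y ≠ 0) (hX2Y : 1 + X ^ 2 * Y ≠ 0) :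
    X * Y * (1 + X * Y) * (1 + X ^ 2 * Y) * pullbackWedge α β f₁ f₄ X Y =
      β * (X * f₄ X) + Y * wedgeRemainder α β f₁ f₄ X Y := by
  unfold pullbackWedge wedgeRemainder
  generalize f₁ (Y * (1 + X ^ 2 * Y)) = b
  field_simp
  ring

lemma wedgeRemainder_zero_right [CommRing 𝕜] (α β : 𝕜) (f₁ f₄ : 𝕜 → 𝕜) (X : 𝕜) :
    wedgeRemainder α β f₁ f₄ X 0 =
      (α + X * f₄ X) * (f₁ 0 + X * (α + β + X * (2 * β))) -
        β * (X * (2 * α + X * (α + 2 * β))) := by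
  simp only [wedgeRemainder, zero_mul, mul_zero, add_zero]
  ring

variable [NontriviallyNormedField 𝕜] {α β : 𝕜} {f₁ f₄ : 𝕜 → 𝕜}

lemma continuousAt_wedgeRemainder (hf₁ : ContinuousAt f₁ 0) (X : 𝕜) :
    ContinuousAt (wedgeRemainder α β f₁ f₄ X) 0 := by
  have hf₁' : ContinuousAt f₁ (0 * (1 + X ^ 2 * 0)) := by simpa
  unfold wedgeRemainder
  fun_prop

lemma expansion_eq_zero_of_pullbackWedge_eq_zero (hf₁ : ContinuousAt f₁ 0) {X : 𝕜} (hX : X ≠ 0)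
    (h : ∀ᶠ Y in 𝓝[≠] 0, pullbackWedge α β f₁ f₄ X Y = 0) :
    β * (X * f₄ X) = 0 ∧ wedgeRemainder α β f₁ f₄ X 0 = 0 := by
  have hR := continuousAt_wedgeRemainder (α := α) (β := β) (f₄ := f₄) hf₁ X
  have hunit (a : 𝕜) : ∀ᶠ Y in 𝓝[≠] 0, 1 + a * Y ≠ 0 :=
    nhdsWithin_le_nhds <| ContinuousAt.eventually_ne (by fun_prop) (by simp)
  have hexpand : ∀ᶠ Y in 𝓝[≠] 0, β * (X * f₄ X) + Y * wedgeRemainder α β f₁ f₄ X Y = 0 := by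
    filter_upwards [h, self_mem_nhdsWithin, hunit X, hunit (X ^ 2)] with Y hwedge hY hXY hX2Y
    rw [← mul_pullbackWedge α β f₁ f₄ hX hY hXY hX2Y, hwedge, mul_zero]
  exact (eq_zero_and_eventually_eq_zero_of_add_mul_eq_zero hR hexpand).imp_right
    (eq_zero_of_eventually_nhdsNE_eq_zero hR)

lemma beta_eq_zero_of_expansion_eq_zero [NeZero (2 : 𝕜)]
    (h : ∀ᶠ X in 𝓝[≠] 0, β * (X * f₄ X) = 0 ∧ wedgeRemainder α β f₁ f₄ X 0 = 0) : β = 0 := by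
  by_contra hβ
  have hquadratic : ∀ᶠ X in 𝓝[≠] 0,
      α * f₁ 0 + X * (α * (α - β) + X * (β * (α - 2 * β))) = 0 := by
    filter_upwards [h] with X ⟨hconst, hlin⟩
    have hf₄ : X * f₄ X = 0 := (mul_eq_zero.1 hconst).resolve_left hβ
    rw [wedgeRemainder_zero_right, hf₄] at hlin
    linear_combination hlin
  obtain ⟨-, hα, hαβ⟩ := quadratic_coeffs_eq_zero hquadratic
  have hα2 : α = 2 * β := sub_eq_zero.1 ((mul_eq_zero.1 hαβ).resolve_left hβ)
  have h2β : 2 * β * β = 0 := by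
    rw [hα2] at hα
    linear_combination hα
  exact mul_ne_zero (mul_ne_zero two_ne_zero hβ) hβ h2β

lemma alpha_eq_zero_of_expansion_eq_zero (hf₄ : ContinuousAt f₄ 0)
    (h : ∀ᶠ X in 𝓝[≠] 0, wedgeRemainder α 0 f₁ f₄ X 0 = 0) : α = 0 := by
  by_contra hα
  have hunit : ∀ᶠ X in 𝓝[≠] 0, α + X * f₄ X ≠ 0 :=
    nhdsWithin_le_nhds <| ContinuousAt.eventually_ne (by fun_prop) (by simpa)
  have hlinear : ∀ᶠ X in 𝓝[≠] 0, f₁ 0 + X * α = 0 := by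
    filter_upwards [h, hunit] with X hX hne
    rw [wedgeRemainder_zero_right] at hX
    exact (mul_eq_zero.1 (by linear_combination hX)).resolve_left hne
  obtain ⟨-, h⟩ := eq_zero_and_eventually_eq_zero_of_add_mul_eq_zero continuousAt_const hlinear
  exact hα (eventually_const.1 h)

theorem statement16_general [NeZero (2 : 𝕜)] (hf₁ : ContinuousAt f₁ 0) (hf₄ : ContinuousAt f₄ 0)
    (hvanish : ∀ᶠ X in 𝓝[≠] 0, ∀ᶠ Y in 𝓝[≠] 0, pullbackWedge α β f₁ f₄ X Y = 0) :
    α = 0 ∧ β = 0 := by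
  have hexpansion : ∀ᶠ X in 𝓝[≠] 0,
      β * (X * f₄ X) = 0 ∧ wedgeRemainder α β f₁ f₄ X 0 = 0 := by
    filter_upwards [hvanish, self_mem_nhdsWithin] with X h hX
    exact expansion_eq_zero_of_pullbackWedge_eq_zero hf₁ hX h
  obtain rfl : β = 0 := beta_eq_zero_of_expansion_eq_zero hexpansion
  exact ⟨alpha_eq_zero_of_expansion_eq_zero hf₄ (hexpansion.mono fun _ => And.right), rfl⟩

end Wedge

/-- for the gluing map `φ(X,Y) = (X(1+XY), Y(1+X²Y))`, if the wedge of the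
logarithmic form `θ₄ = (α/X + f₄(X))dX + (β/Y)dY` with the pullback `φ*θ₁` of
`θ₁ = (α/X)dX + (β/Y + f₁(Y))dY` vanishes identically on a punctured bidisc, then
`α = 0` and `β = 0` (so every foliation of the formal pencil diverges). -/
theorem statement16 (α β : ℂ) (ρ₀ : ℝ) (hρ₀ : 0 < ρ₀) (f₁ f₄ : ℂ → ℂ)
    (hf₁ : DifferentiableOn ℂ f₁ {w : ℂ | ‖w‖ < ρ₀})
    (hf₄ : DifferentiableOn ℂ f₄ {w : ℂ | ‖w‖ < ρ₀})
    (hvanish : ∃ ρ : ℝ, 0 < ρ ∧ ρ ≤ ρ₀ ∧ ρ ≤ 1 ∧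
      ∀ X Y : ℂ, 0 < ‖X‖ → ‖X‖ < ρ →
        0 < ‖Y‖ → ‖Y‖ < ρ →
        (α / X + f₄ X) *
            ((α / (X * (1 + X * Y))) * X ^ 2 +
              (β / (Y * (1 + X ^ 2 * Y)) + f₁ (Y * (1 + X ^ 2 * Y))) *
                (1 + 2 * X ^ 2 * Y)) -
          (β / Y) *
            ((α / (X * (1 + X * Y))) * (1 + 2 * X * Y) +
              (β / (Y * (1 + X ^ 2 * Y)) + f₁ (Y * (1 + X ^ 2 * Y))) *
                (2 * X * Y ^ 2)) = 0) :
    α = 0 ∧ β = 0 := by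
  obtain ⟨ρ, hρ, -, -, hvanish⟩ := hvanish
  have hball : {w : ℂ | ‖w‖ < ρ₀} ∈ 𝓝 0 :=
    (isOpen_lt continuous_norm continuous_const).mem_nhds (by simpa)
  exact statement16_general (hf₁.differentiableAt hball).continuousAt
    (hf₄.differentiableAt hball).continuousAt
    (eventually_eventually_nhdsNE_of_punctured_bidisc hρ hvanish)
end

section
/- Fix τ ∈ ℂ with Im τ > 0 and u₀, v₀ ∈ ℂ not both zero; set α₀ := τ·(v₀ − u₀) and β₀ := u₀. Define φ(X,Y) := (X·(1+XYe^Y)^{−β₀}, Y·(1+XYe^Y)^{α₀}) on a neighborhood of (0,0) in ℂ², where w ↦ (1+w)^{s} := exp(s·Log(1+w)) uses the principal logarithm. Given α, β ∈ ℂ and holomorphic germs f₁, f₄ : {w ∈ ℂ : |w| < ρ₀} → ℂ, define P₁(X,Y) := α/X, Q₁(X,Y) := β/Y + f₁(Y), P₄(X,Y) := α/X + f₄(X), Q₄(X,Y) := β/Y, and let P̃₁ := P₁(φ)·∂_Xφ₁ + Q₁(φ)·∂_Xφ₂ and Q̃₁ := P₁(φ)·∂_Yφ₁ + Q₁(φ)·∂_Yφ₂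 be the components of the pullback of P₁dX + Q₁dY by φ. If there exists ρ > 0 such that P₄·Q̃₁ − Q₄·P̃₁ = 0 identically on {(X,Y) : 0 < |X| < ρ, 0 < |Y| < ρ}, then α₀·β = α·β₀. (Consequently, for the neighborhood glued by the cocycle with φ_{1,4} = φ and all other gluings the identity, the foliation F_{t₀} with t₀ = [u₀ : v₀] is the unique convergent foliation of the pencil.) -/
open Complex

/-- First component `φ₁(X,Y) = X·(1+XYe^Y)^{−β₀}` (principal branch). -/
noncomputable def phiOne (β₀ X Y : ℂ) : ℂ :=
  X * Complex.exp (-β₀ * Complex.log (1 + X * Y * Complex.exp Y))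

/-- Second component `φ₂(X,Y) = Y·(1+XYe^Y)^{α₀}` (principal branch). -/
noncomputable def phiTwo (α₀ X Y : ℂ) : ℂ :=
  Y * Complex.exp (α₀ * Complex.log (1 + X * Y * Complex.exp Y))

/-!
Write `a = α₀` and `b = β₀`. In the frame `dX/X`, `dY/Y`, the coefficient of `θ₄ ∧ φ*θ₁` is
`A'B − B'A + (aB − bA) M (A'(1 + Y) − B')`, where `A' = α + X f₄(X)`, `B' = β`, `A = α` and
`B = β + φ₂ f₁(φ₂)`, and where `M = XYeʸ/(1 + XYeʸ)` vanishes on both axes. If this is identically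
zero, letting `Y → 0` gives `β f₄ = 0` and letting `X → 0` gives `α f₁ = 0`. If `α ≠ 0`, what
remains is `(aβ − αb) M ((α + X f₄(X))(1 + Y) − β) = 0`, whose last factor is not identically zero,
because it restricts to `α(1 + Y) − β` on `X = 0`. If `α = 0 ≠ β`, what remains is
`a (β + φ₂ f₁(φ₂)) M β = 0`; dividing by `Mβ` and letting `(X, Y) → (0, 0)` gives `aβ = 0`.
-/

open Filter
open scoped Topology

/-- The unit `(1 + XYeʸ)ˢ` (principal branch), the common shape of the factors `φ₁ / X` (with
`s = -β₀`) and `φ₂ / Y` (with `s = α₀`) of the gluing map. -/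
noncomputable def gluingUnit (s X Y : ℂ) : ℂ :=
  exp (s * log (1 + X * Y * exp Y))

/-- The logarithmic derivative `X ∂_X log (1 + XYeʸ)`. Since `Y ∂_Y log (1 + XYeʸ)` is `1 + Y` times
it, it governs all partial derivatives of the gluing map. -/
noncomputable def gluingLogDeriv (X Y : ℂ) : ℂ :=
  X * Y * exp Y / (1 + X * Y * exp Y)

/-- The coefficient of `dX ∧ dY` in `(P' dX + Q' dY) ∧ φ*(P dX + Q dY)` for `φ = (φ₁, φ₂)`. -/
noncomputable def wedgePullback (φ₁ φ₂ P' Q' P Q : ℂ → ℂ → ℂ) (X Y : ℂ) : ℂ :=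
  P' X Y *
      (P (φ₁ X Y) (φ₂ X Y) * deriv (fun t => φ₁ X t) Y +
        Q (φ₁ X Y) (φ₂ X Y) * deriv (fun t => φ₂ X t) Y) -
    Q' X Y *
      (P (φ₁ X Y) (φ₂ X Y) * deriv (fun t => φ₁ t Y) X +
        Q (φ₁ X Y) (φ₂ X Y) * deriv (fun t => φ₂ t Y) X)

/-- The coefficient of `dX/X ∧ dY/Y` in `(A' dX/X + B' dY/Y) ∧ φ*(A dX/X + B dY/Y)` for the gluing
map `φ` with exponents `-b` and `a`. Here `A` and `B` are values at `φ(X, Y)`, whereas `A'` and `B'`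
are values at `(X, Y)`. Unlike `wedgePullback`, it makes sense on the axes. -/
noncomputable def logWedge (a b A' B' A B X Y : ℂ) : ℂ :=
  A' * B - B' * A + (a * B - b * A) * gluingLogDeriv X Y * (A' * (1 + Y) - B')

section Derivatives

variable {a b s X Y : ℂ}

lemma phiOne_ne_zero (hX : X ≠ 0) : phiOne b X Y ≠ 0 :=
  mul_ne_zero hX (exp_ne_zero _)

lemma phiTwo_ne_zero (hY : Y ≠ 0) : phiTwo a X Y ≠ 0 :=
  mul_ne_zero hY (exp_ne_zero _)

lemma hasDerivAt_gluingUnit_left (hX : X ≠ 0) (hXY : 1 + X * Y * exp Y ∈ slitPlane) :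
    HasDerivAt (fun t => gluingUnit s t Y)
      (s * gluingLogDeriv X Y / X * gluingUnit s X Y) X := by
  have hlin : HasDerivAt (fun t => 1 + t * Y * exp Y) (Y * exp Y) X := by
    simpa using (((hasDerivAt_id X).mul_const Y).mul_const (exp Y)).const_add 1
  refine ((hlin.clog hXY).const_mul s).cexp.congr_deriv ?_
  simp only [gluingUnit, gluingLogDeriv]
  field_simp

lemma hasDerivAt_gluingUnit_right (hY : Y ≠ 0) (hXY : 1 + X * Y * exp Y ∈ slitPlane) :
    HasDerivAt (fun t => gluingUnit s X t)
      (s * ((1 + Y) * gluingLogDeriv X Y) / Y * gluingUnit s X Y) Y := by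
  have hprod : HasDerivAt (fun t => 1 + X * t * exp t) (X * exp Y + X * Y * exp Y) Y := by
    simpa using (((hasDerivAt_id Y).const_mul X).mul (hasDerivAt_exp Y)).const_add 1
  refine ((hprod.clog hXY).const_mul s).cexp.congr_deriv ?_
  simp only [gluingUnit, gluingLogDeriv]
  field_simp

lemma deriv_phiOne_left (hX : X ≠ 0) (hXY : 1 + X * Y * exp Y ∈ slitPlane) :
    deriv (fun t => phiOne b t Y) X = phiOne b X Y / X * (1 - b * gluingLogDeriv X Y) := by
  refine ((hasDerivAt_id X).mul (hasDerivAt_gluingUnit_left (s := -b) hX hXY)).deriv.trans ?_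
  simp only [phiOne, gluingUnit, id]
  field_simp
  ring

lemma deriv_phiOne_right (hY : Y ≠ 0) (hXY : 1 + X * Y * exp Y ∈ slitPlane) :
    deriv (fun t => phiOne b X t) Y =
      phiOne b X Y / Y * (-b * ((1 + Y) * gluingLogDeriv X Y)) := by
  refine ((hasDerivAt_gluingUnit_right (s := -b) hY hXY).const_mul X).deriv.trans ?_
  simp only [phiOne, gluingUnit]
  ring

lemma deriv_phiTwo_left (hX : X ≠ 0) (hXY : 1 + X * Y * exp Y ∈ slitPlane) :
    deriv (fun t => phiTwo a t Y) X = phiTwo a X Y / X * (a * gluingLogDeriv X Y) := by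
  refine ((hasDerivAt_gluingUnit_left (s := a) hX hXY).const_mul Y).deriv.trans ?_
  simp only [phiTwo, gluingUnit]
  ring

lemma deriv_phiTwo_right (hY : Y ≠ 0) (hXY : 1 + X * Y * exp Y ∈ slitPlane) :
    deriv (fun t => phiTwo a X t) Y =
      phiTwo a X Y / Y * (1 + a * ((1 + Y) * gluingLogDeriv X Y)) := by
  refine ((hasDerivAt_id Y).mul (hasDerivAt_gluingUnit_right (s := a) hY hXY)).deriv.trans ?_
  simp only [phiTwo, gluingUnit, id]
  field_simp

lemma mul_wedgePullback_eq_logWedge (P' Q' P Q : ℂ → ℂ → ℂ) (hX : X ≠ 0) (hY : Y ≠ 0)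
    (hXY : 1 + X * Y * exp Y ∈ slitPlane) :
    X * Y * wedgePullback (phiOne b) (phiTwo a) P' Q' P Q X Y =
      logWedge a b (X * P' X Y) (Y * Q' X Y)
        (phiOne b X Y * P (phiOne b X Y) (phiTwo a X Y))
        (phiTwo a X Y * Q (phiOne b X Y) (phiTwo a X Y)) X Y := by
  rw [wedgePullback, deriv_phiOne_left hX hXY, deriv_phiOne_right hY hXY,
    deriv_phiTwo_left hX hXY, deriv_phiTwo_right hY hXY, logWedge]
  field_simp
  ring

end Derivatives

section Limits

variable {ι : Type*} {l : Filter ι} {x y : ι → ℂ} {x₀ y₀ : ℂ}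

lemma tendsto_one_add_mul_exp (hx : Tendsto x l (𝓝 x₀)) (hy : Tendsto y l (𝓝 y₀))
    (haxis : x₀ * y₀ = 0) : Tendsto (fun i => 1 + x i * y i * exp (y i)) l (𝓝 1) := by
  simpa [haxis] using ((hx.mul hy).mul hy.cexp).const_add 1

lemma tendsto_phiTwo (a : ℂ) (hx : Tendsto x l (𝓝 x₀)) (hy : Tendsto y l (𝓝 y₀))
    (haxis : x₀ * y₀ = 0) : Tendsto (fun i => phiTwo a (x i) (y i)) l (𝓝 y₀) := by
  have hlog := (tendsto_one_add_mul_exp hx hy haxis).clog one_mem_slitPlane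
  simpa [phiTwo] using hy.mul (hlog.const_mul a).cexp

lemma tendsto_gluingLogDeriv (hx : Tendsto x l (𝓝 x₀)) (hy : Tendsto y l (𝓝 y₀))
    (haxis : x₀ * y₀ = 0) : Tendsto (fun i => gluingLogDeriv (x i) (y i)) l (𝓝 0) := by
  simpa [gluingLogDeriv, haxis, Pi.div_def] using
    ((hx.mul hy).mul hy.cexp).div (tendsto_one_add_mul_exp hx hy haxis) one_ne_zero

lemma tendsto_logWedge {A' B' A B : ι → ℂ} {A'₀ B'₀ A₀ B₀ : ℂ} (a b : ℂ)
    (hx : Tendsto x l (𝓝 x₀)) (hy : Tendsto y l (𝓝 y₀)) (haxis : x₀ * y₀ = 0)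
    (hA' : Tendsto A' l (𝓝 A'₀)) (hB' : Tendsto B' l (𝓝 B'₀))
    (hA : Tendsto A l (𝓝 A₀)) (hB : Tendsto B l (𝓝 B₀)) :
    Tendsto (fun i => logWedge a b (A' i) (B' i) (A i) (B i) (x i) (y i)) l
      (𝓝 (A'₀ * B₀ - B'₀ * A₀)) := by
  simpa [logWedge] using ((hA'.mul hB).sub (hB'.mul hA)).add
    ((((hB.const_mul a).sub (hA.const_mul b)).mul (tendsto_gluingLogDeriv hx hy haxis)).mul
      ((hA'.mul (hy.const_add 1)).sub hB'))

end Limits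

section PuncturedNhds

lemma tendsto_fst_nhdsWithin_prod {E F : Type*} [TopologicalSpace E] {x : E} {s : Set E}
    {l : Filter F} : Tendsto Prod.fst (𝓝[s] x ×ˢ l) (𝓝 x) :=
  tendsto_fst.mono_right nhdsWithin_le_nhds

lemma tendsto_snd_nhdsWithin_prod {E F : Type*} [TopologicalSpace F] {y : F} {s : Set F}
    {l : Filter E} : Tendsto Prod.snd (l ×ˢ 𝓝[s] y) (𝓝 y) :=
  tendsto_snd.mono_right nhdsWithin_le_nhds

lemma eventually_puncturedNhds_prod_ne {E F : Type*} [TopologicalSpace E] [TopologicalSpace F]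
    {x : E} {y : F} : ∀ᶠ p : E × F in 𝓝[≠] x ×ˢ 𝓝[≠] y, p.1 ≠ x ∧ p.2 ≠ y :=
  eventually_mem_nhdsWithin.prod_mk eventually_mem_nhdsWithin

lemma eventually_puncturedNhds_prod_of_forall_norm_lt {E F : Type*} [NormedAddCommGroup E]
    [NormedAddCommGroup F] {p : E → F → Prop} {ρ : ℝ} (hρ : 0 < ρ)
    (h : ∀ X Y, 0 < ‖X‖ → ‖X‖ < ρ → 0 < ‖Y‖ → ‖Y‖ < ρ → p X Y) :
    ∀ᶠ q : E × F in 𝓝[≠] 0 ×ˢ 𝓝[≠] 0, p q.1 q.2 := by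
  filter_upwards [eventually_puncturedNhds_prod_ne,
    tendsto_fst_nhdsWithin_prod.eventually_mem (Metric.ball_mem_nhds 0 hρ),
    tendsto_snd_nhdsWithin_prod.eventually_mem (Metric.ball_mem_nhds 0 hρ)] with q hq hX hY
  exact h q.1 q.2 (norm_pos_iff.2 hq.1) (mem_ball_zero_iff.1 hX)
    (norm_pos_iff.2 hq.2) (mem_ball_zero_iff.1 hY)

lemma eventually_one_add_mul_exp_mem_slitPlane :
    ∀ᶠ p : ℂ × ℂ in 𝓝[≠] 0 ×ˢ 𝓝[≠] 0, 1 + p.1 * p.2 * exp p.2 ∈ slitPlane :=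
  (tendsto_one_add_mul_exp tendsto_fst_nhdsWithin_prod tendsto_snd_nhdsWithin_prod
    (mul_zero 0)).eventually_mem (isOpen_slitPlane.mem_nhds one_mem_slitPlane)

lemma eventually_gluingLogDeriv_ne_zero :
    ∀ᶠ p : ℂ × ℂ in 𝓝[≠] 0 ×ˢ 𝓝[≠] 0, gluingLogDeriv p.1 p.2 ≠ 0 := by
  filter_upwards [eventually_puncturedNhds_prod_ne, eventually_one_add_mul_exp_mem_slitPlane]
    with p hp hslit
  exact div_ne_zero (mul_ne_zero (mul_ne_zero hp.1 hp.2) (exp_ne_zero _))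
    (slitPlane_ne_zero hslit)

lemma tendsto_phiTwo_puncturedNhds (a : ℂ) :
    Tendsto (fun p : ℂ × ℂ => phiTwo a p.1 p.2) (𝓝[≠] 0 ×ˢ 𝓝[≠] 0) (𝓝[≠] 0) :=
  tendsto_nhdsWithin_iff.2 ⟨tendsto_phiTwo a tendsto_fst_nhdsWithin_prod
    tendsto_snd_nhdsWithin_prod (mul_zero 0),
    eventually_puncturedNhds_prod_ne.mono fun _ hp => phiTwo_ne_zero hp.2⟩

end PuncturedNhds

section Residues

variable {a b α β : ℂ} {g₁ g₄ : ℂ → ℂ}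

lemma eventually_beta_mul_eq_zero (hg₁ : Tendsto g₁ (𝓝 0) (𝓝 0))
    (h : ∀ᶠ p : ℂ × ℂ in 𝓝[≠] 0 ×ˢ 𝓝[≠] 0,
      logWedge a b (α + g₄ p.1) β α (β + g₁ (phiTwo a p.1 p.2)) p.1 p.2 = 0) :
    ∀ᶠ X in 𝓝[≠] 0, β * g₄ X = 0 := by
  filter_upwards [h.curry] with X hX
  have hY : Tendsto (fun Y : ℂ => Y) (𝓝[≠] 0) (𝓝 0) := nhdsWithin_le_nhds
  have hlim := tendsto_logWedge a b (tendsto_const_nhds (x := X)) hY (mul_zero X)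
    (tendsto_const_nhds (x := α + g₄ X)) (tendsto_const_nhds (x := β))
    (tendsto_const_nhds (x := α))
    ((hg₁.comp (tendsto_phiTwo a tendsto_const_nhds hY (mul_zero X))).const_add β)
  have hzero := tendsto_nhds_unique (hlim.congr' hX) tendsto_const_nhds
  linear_combination hzero

lemma eventually_alpha_mul_eq_zero (hg₁ : ∀ᶠ w in 𝓝 0, ContinuousAt g₁ w)
    (hg₄ : Tendsto g₄ (𝓝[≠] 0) (𝓝 0))
    (h : ∀ᶠ p : ℂ × ℂ in 𝓝[≠] 0 ×ˢ 𝓝[≠] 0,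
      logWedge a b (α + g₄ p.1) β α (β + g₁ (phiTwo a p.1 p.2)) p.1 p.2 = 0) :
    ∀ᶠ Y in 𝓝[≠] 0, α * g₁ Y = 0 := by
  filter_upwards [(eventually_swap_iff.1 h).curry, hg₁.filter_mono nhdsWithin_le_nhds]
    with Y hY hcont
  have hX : Tendsto (fun X : ℂ => X) (𝓝[≠] 0) (𝓝 0) := nhdsWithin_le_nhds
  have hlim := tendsto_logWedge a b hX (tendsto_const_nhds (x := Y)) (zero_mul Y)
    (hg₄.const_add α) (tendsto_const_nhds (x := β)) (tendsto_const_nhds (x := α))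
    ((hcont.tendsto.comp (tendsto_phiTwo a hX tendsto_const_nhds (zero_mul Y))).const_add β)
  have hzero := tendsto_nhds_unique (hlim.congr' hY) tendsto_const_nhds
  linear_combination hzero

lemma mul_eq_zero_of_logWedge_eq_zero (hβ : β ≠ 0) (hg₁ : Tendsto g₁ (𝓝 0) (𝓝 0))
    (h : ∀ᶠ p : ℂ × ℂ in 𝓝[≠] 0 ×ˢ 𝓝[≠] 0,
      logWedge a b (g₄ p.1) β 0 (β + g₁ (phiTwo a p.1 p.2)) p.1 p.2 = 0) :
    a * β = 0 := by
  have hvanish : ∀ᶠ p : ℂ × ℂ in 𝓝[≠] 0 ×ˢ 𝓝[≠] 0, a * (β + g₁ (phiTwo a p.1 p.2)) = 0 := by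
    have hβg₄ : ∀ᶠ X in 𝓝[≠] 0, β * g₄ X = 0 :=
      eventually_beta_mul_eq_zero (α := 0) hg₁ (by simpa using h)
    filter_upwards [h, hβg₄.prod_inl _, eventually_gluingLogDeriv_ne_zero] with p hp hβg₄ hM
    have hg₄ : g₄ p.1 = 0 := (mul_eq_zero.1 hβg₄).resolve_left hβ
    simpa [logWedge, hg₄, hM, hβ] using hp
  have hlim := ((hg₁.comp ((tendsto_phiTwo_puncturedNhds a).mono_right
    nhdsWithin_le_nhds)).const_add β).const_mul a
  simpa using tendsto_nhds_unique (hlim.congr' hvanish) tendsto_const_nhds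

lemma not_eventually_add_mul_one_add_eq (hα : α ≠ 0) (hg₄ : Tendsto g₄ (𝓝[≠] 0) (𝓝 0)) :
    ¬ ∀ᶠ p : ℂ × ℂ in 𝓝[≠] 0 ×ˢ 𝓝[≠] 0, (α + g₄ p.1) * (1 + p.2) = β := by
  intro h
  have haffine : ∀ᶠ Y in 𝓝[≠] (0 : ℂ), α * (1 + Y) = β := by
    filter_upwards [(eventually_swap_iff.1 h).curry] with Y hY
    have hlim := (hg₄.const_add α).mul_const (1 + Y)
    simpa using tendsto_nhds_unique (hlim.congr' hY) tendsto_const_nhds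
  have hconst : α = β := by
    have hY : Tendsto (fun Y : ℂ => Y) (𝓝[≠] 0) (𝓝 0) := nhdsWithin_le_nhds
    simpa using tendsto_nhds_unique (((hY.const_add 1).const_mul α).congr' haffine)
      tendsto_const_nhds
  obtain ⟨Y, hY, hY₀⟩ := (haffine.and eventually_mem_nhdsWithin).exists
  exact mul_ne_zero hα hY₀ (by linear_combination hY - hconst)

lemma mul_eq_mul_of_logWedge_eq_zero_of_ne_zero (hα : α ≠ 0)
    (hg₁ : ∀ᶠ w in 𝓝 0, ContinuousAt g₁ w)
    (hg₁₀ : g₁ 0 = 0) (hg₄ : Tendsto g₄ (𝓝[≠] 0) (𝓝 0))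
    (h : ∀ᶠ p : ℂ × ℂ in 𝓝[≠] 0 ×ˢ 𝓝[≠] 0,
      logWedge a b (α + g₄ p.1) β α (β + g₁ (phiTwo a p.1 p.2)) p.1 p.2 = 0) :
    a * β = α * b := by
  have hg₁_lim : Tendsto g₁ (𝓝 0) (𝓝 0) := by simpa [hg₁₀] using hg₁.self_of_nhds.tendsto
  by_contra hne
  refine not_eventually_add_mul_one_add_eq (β := β) hα hg₄ ?_
  filter_upwards [h, (eventually_beta_mul_eq_zero hg₁_lim h).prod_inl _,
    (tendsto_phiTwo_puncturedNhds a).eventually (eventually_alpha_mul_eq_zero hg₁ hg₄ h),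
    eventually_gluingLogDeriv_ne_zero] with p hp hβg₄ hαg₁ hM
  have hg₁p : g₁ (phiTwo a p.1 p.2) = 0 := (mul_eq_zero.1 hαg₁).resolve_left hα
  have hfactor : (a * β - α * b) * gluingLogDeriv p.1 p.2 *
      ((α + g₄ p.1) * (1 + p.2) - β) = 0 := by
    rw [logWedge, hg₁p] at hp
    linear_combination hp - hβg₄
  exact sub_eq_zero.1
    ((mul_eq_zero.1 hfactor).resolve_left (mul_ne_zero (sub_ne_zero.2 hne) hM))

lemma mul_eq_mul_of_logWedge_eq_zero (hg₁ : ∀ᶠ w in 𝓝 0, ContinuousAt g₁ w)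
    (hg₁₀ : g₁ 0 = 0) (hg₄ : Tendsto g₄ (𝓝[≠] 0) (𝓝 0))
    (h : ∀ᶠ p : ℂ × ℂ in 𝓝[≠] 0 ×ˢ 𝓝[≠] 0,
      logWedge a b (α + g₄ p.1) β α (β + g₁ (phiTwo a p.1 p.2)) p.1 p.2 = 0) :
    a * β = α * b := by
  rcases eq_or_ne α 0 with rfl | hα
  · rcases eq_or_ne β 0 with rfl | hβ
    · rw [mul_zero, zero_mul]
    · have hg₁_lim : Tendsto g₁ (𝓝 0) (𝓝 0) := by simpa [hg₁₀] using hg₁.self_of_nhds.tendsto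
      rw [zero_mul, mul_eq_zero_of_logWedge_eq_zero hβ hg₁_lim (by simpa using h)]
  · exact mul_eq_mul_of_logWedge_eq_zero_of_ne_zero hα hg₁ hg₁₀ hg₄ h

end Residues

theorem statement17_general (a b α β : ℂ) (f₁ f₄ : ℂ → ℂ)
    (hf₁ : ∀ᶠ w in 𝓝 0, ContinuousAt f₁ w) (hf₄ : ContinuousAt f₄ 0)
    (hvanish : ∀ᶠ p : ℂ × ℂ in 𝓝[≠] 0 ×ˢ 𝓝[≠] 0,
      wedgePullback (phiOne b) (phiTwo a) (fun X _ => α / X + f₄ X) (fun _ Y => β / Y)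
        (fun X _ => α / X) (fun _ Y => β / Y + f₁ Y) p.1 p.2 = 0) :
    a * β = α * b := by
  have hg₁ : ∀ᶠ w in 𝓝 0, ContinuousAt (fun w => w * f₁ w) w :=
    hf₁.mono fun w hw => continuousAt_id.mul hw
  have hg₄ : Tendsto (fun X => X * f₄ X) (𝓝[≠] 0) (𝓝 0) := by
    simpa [Pi.mul_def] using (continuousAt_id.mul hf₄).tendsto.mono_left nhdsWithin_le_nhds
  have hlog : ∀ᶠ p : ℂ × ℂ in 𝓝[≠] 0 ×ˢ 𝓝[≠] 0,
      logWedge a b (α + p.1 * f₄ p.1) β α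
        (β + phiTwo a p.1 p.2 * f₁ (phiTwo a p.1 p.2)) p.1 p.2 = 0 := by
    filter_upwards [hvanish, eventually_puncturedNhds_prod_ne,
      eventually_one_add_mul_exp_mem_slitPlane] with ⟨X, Y⟩ hp ⟨hX, hY⟩ hslit
    have hmul := mul_wedgePullback_eq_logWedge (a := a) (b := b) (fun X _ => α / X + f₄ X)
      (fun _ Y => β / Y) (fun X _ => α / X) (fun _ Y => β / Y + f₁ Y) hX hY hslit
    simpa only [hp, mul_zero, mul_add, mul_div_cancel₀ _ hX, mul_div_cancel₀ _ hY,
      mul_div_cancel₀ _ (phiOne_ne_zero hX), mul_div_cancel₀ _ (phiTwo_ne_zero hY)] using hmul.symm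
  exact mul_eq_mul_of_logWedge_eq_zero (g₁ := fun w => w * f₁ w) (g₄ := fun X => X * f₄ X)
    hg₁ (zero_mul _) hg₄ hlog

/-- for the gluing map `φ = (φ₁, φ₂)` above (with `α₀ = τ(v₀−u₀)`,
`β₀ = u₀`), if the wedge of `θ₄ = (α/X + f₄(X))dX + (β/Y)dY` with the pullback by `φ` of
`θ₁ = (α/X)dX + (β/Y + f₁(Y))dY` vanishes identically on a punctured bidisc, then
`α₀·β = α·β₀` (so `F_{t₀}`, `t₀ = [u₀ : v₀]`, is the unique convergent foliation). -/
theorem statement17 (τ : ℂ) (hτ : 0 < τ.im) (u₀ v₀ : ℂ) (huv : ¬(u₀ = 0 ∧ v₀ = 0))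
    (α β : ℂ) (ρ₀ : ℝ) (hρ₀ : 0 < ρ₀) (f₁ f₄ : ℂ → ℂ)
    (hf₁ : DifferentiableOn ℂ f₁ {w : ℂ | ‖w‖ < ρ₀})
    (hf₄ : DifferentiableOn ℂ f₄ {w : ℂ | ‖w‖ < ρ₀})
    (hvanish : ∃ ρ : ℝ, 0 < ρ ∧ ρ ≤ ρ₀ ∧ ρ ≤ 1 / 2 ∧
      ∀ X Y : ℂ, 0 < ‖X‖ → ‖X‖ < ρ →
        0 < ‖Y‖ → ‖Y‖ < ρ →
        (α / X + f₄ X) *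
            ((α / phiOne u₀ X Y) * deriv (fun t : ℂ => phiOne u₀ X t) Y +
              (β / phiTwo (τ * (v₀ - u₀)) X Y + f₁ (phiTwo (τ * (v₀ - u₀)) X Y)) *
                deriv (fun t : ℂ => phiTwo (τ * (v₀ - u₀)) X t) Y) -
          (β / Y) *
            ((α / phiOne u₀ X Y) * deriv (fun t : ℂ => phiOne u₀ t Y) X +
              (β / phiTwo (τ * (v₀ - u₀)) X Y + f₁ (phiTwo (τ * (v₀ - u₀)) X Y)) *
                deriv (fun t : ℂ => phiTwo (τ * (v₀ - u₀)) t Y) X) = 0) :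
    (τ * (v₀ - u₀)) * β = α * u₀ := by
  obtain ⟨ρ, hρ, -, -, h⟩ := hvanish
  have hball : {w : ℂ | ‖w‖ < ρ₀} ∈ 𝓝 0 := by
    simpa [Metric.ball] using Metric.ball_mem_nhds (0 : ℂ) hρ₀
  exact statement17_general _ _ α β f₁ f₄
    ((hf₁.eventually_differentiableAt hball).mono fun _ hw => hw.continuousAt)
    (hf₄.differentiableAt hball).continuousAt
    (eventually_puncturedNhds_prod_of_forall_norm_lt hρ h)
end
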